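/- arXiv:1703.01811 — 3 statements merged into one kernel-verified Lean document; each statement's English description precedes it below -/
import Mathlib

section
/- Let Ω ⊆ ℝ^m be open, g : Ω → ℝ, e a unit coordinate vector, and α ∈ (0,1]. Suppose the partial derivative ∂_e g exists at every point of Ω and is α-Hölder on Ω with constant M, i.e. |∂_e g(s) − ∂_e g(s')| ≤ M|s−s'|^α for all s,s' ∈ Ω. Then for every s ∈ Ω and all nonzero real λ, μ such that the segments {s + x λ e : x ∈ [0,1]} and {s + x μ e : x ∈ [0,1]} lie in Ω, one has | (g(s+λe)−g(s))/λ − (g(s+μe)−g(s))/μ | ≤ M |λ−μ|^α. -/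
open Filter Topology

/-!
Consider `φ x = g (s + xλe) / λ - g (s + xμe) / μ` on `[0, 1]`. Its increment `φ 1 - φ 0` is the
difference of the two difference quotients, and the chain rule (`hasDerivAt_along_line`) gives
`φ' x = g' (s + xλe) - g' (s + xμe)`. By the mean value theorem the increment equals `φ' ξ` for some
`ξ ∈ (0, 1)`, and the Hölder bound yields `|φ' ξ| ≤ M (ξ |λ - μ|) ^ α ≤ M |λ - μ| ^ α`.
-/

/-- Chain rule for `x ↦ g (s + xce) / c`, using only that `g` has a derivative in the direction `e`
at the single point `s + xce`. -/
lemma hasDerivAt_along_line {E : Type*} [AddCommGroup E] [Module ℝ E] {g : E → ℝ} {s e : E}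
    {c x d : ℝ} (hc : c ≠ 0)
    (h : Tendsto (fun h : ℝ => h⁻¹ * (g (s + (x * c) • e + h • e) - g (s + (x * c) • e)))
      (𝓝[≠] (0 : ℝ)) (𝓝 d)) :
    HasDerivAt (fun y : ℝ => g (s + (y * c) • e) / c) d x := by
  have h1 : HasDerivAt (fun t : ℝ => g (s + t • e)) d (x * c) := by
    rw [hasDerivAt_iff_tendsto_slope_zero]
    simpa only [add_smul, ← add_assoc, smul_eq_mul] using h
  have h2 := (h1.comp x ((hasDerivAt_id x).mul_const c)).div_const c
  simpa [Function.comp_def, hc] using h2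

/-- Hölder continuity of a partial derivative controls the deviation
between difference quotients in that coordinate direction. -/
theorem difference_quotient_holder_estimate
    {m : ℕ} (Ω : Set (EuclideanSpace ℝ (Fin m))) (hΩ : IsOpen Ω)
    (g : EuclideanSpace ℝ (Fin m) → ℝ) (i : Fin m) (α M : ℝ)
    (hα0 : 0 < α) (hα1 : α ≤ 1)
    (g' : EuclideanSpace ℝ (Fin m) → ℝ)
    (hderiv : ∀ s ∈ Ω,
      Filter.Tendsto (fun h : ℝ => h⁻¹ * (g (s + h • EuclideanSpace.single i (1:ℝ)) - g s))
        (𝓝[≠] (0:ℝ)) (𝓝 (g' s)))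
    (hHolder : ∀ s ∈ Ω, ∀ t ∈ Ω, |g' s - g' t| ≤ M * dist s t ^ α) :
    ∀ s ∈ Ω, ∀ lam mu : ℝ, lam ≠ 0 → mu ≠ 0 →
      (∀ x ∈ Set.Icc (0:ℝ) 1, s + (x * lam) • EuclideanSpace.single i (1:ℝ) ∈ Ω) →
      (∀ x ∈ Set.Icc (0:ℝ) 1, s + (x * mu) • EuclideanSpace.single i (1:ℝ) ∈ Ω) →
      |(g (s + lam • EuclideanSpace.single i (1:ℝ)) - g s) / lam
        - (g (s + mu • EuclideanSpace.single i (1:ℝ)) - g s) / mu|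
        ≤ M * |lam - mu| ^ α := by
  intro s hs lam mu hlam hmu hsegl hsegm
  set e := EuclideanSpace.single i (1 : ℝ) with he
  have hφ : ∀ x ∈ Set.Icc (0 : ℝ) 1,
      HasDerivAt (fun y : ℝ => g (s + (y * lam) • e) / lam - g (s + (y * mu) • e) / mu)
        (g' (s + (x * lam) • e) - g' (s + (x * mu) • e)) x := fun x hx =>
    (hasDerivAt_along_line hlam (hderiv _ (hsegl x hx))).sub
      (hasDerivAt_along_line hmu (hderiv _ (hsegm x hx)))
  obtain ⟨ξ, hξ, hmvt⟩ := exists_hasDerivAt_eq_slope _ _ one_pos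
    (fun x hx => (hφ x hx).continuousAt.continuousWithinAt)
    (fun x hx => hφ x (Set.Ioo_subset_Icc_self hx))
  have hξ' := Set.Ioo_subset_Icc_self hξ
  have hincr : (g (s + lam • e) - g s) / lam - (g (s + mu • e) - g s) / mu
      = g' (s + (ξ * lam) • e) - g' (s + (ξ * mu) • e) := by
    rw [hmvt]
    simp only [one_mul, zero_mul, zero_smul, add_zero, sub_zero, div_one]
    ring
  have hdist : dist (s + (ξ * lam) • e) (s + (ξ * mu) • e) = ξ * |lam - mu| := by
    rw [dist_add_left, dist_eq_norm, ← sub_smul, norm_smul, ← mul_sub, norm_mul, he]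
    simp [abs_of_pos hξ.1]
  have hbound := hHolder _ (hsegl ξ hξ') _ (hsegm ξ hξ')
  rw [hdist] at hbound
  rw [hincr]
  rcases eq_or_ne lam mu with rfl | hne
  · simpa using hbound
  · have hpos : 0 < |lam - mu| := abs_pos.mpr (sub_ne_zero.mpr hne)
    -- The sign of `M` is not assumed; it follows from the Hölder bound at two distinct points.
    have hM : 0 ≤ M := nonneg_of_mul_nonneg_left ((abs_nonneg _).trans hbound)
      (Real.rpow_pos_of_pos (mul_pos hξ.1 hpos) α)
    refine hbound.trans (mul_le_mul_of_nonneg_left ?_ hM)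
    exact Real.rpow_le_rpow (mul_pos hξ.1 hpos).le
      (mul_le_of_le_one_left hpos.le hξ.2.le) hα0.le
end

section
/- Let D ⊂ ℂ be an open disc whose closure is contained in an open set U ⊆ ℂ. Let f : U → ℝ be continuously differentiable on U and twice continuously differentiable on U ∖ ℝ, and let g : U → ℝ be continuous with Δf = g on U ∖ ℝ. Then for every s ∈ D, 2π f(s) = ∫_D g(t) log|s−t| dA(t) + ∫_{∂D} ( f(t) · ∂log|s−t|/∂n_t − (∂f/∂n)(t) · log|s−t| ) dσ(t), where dA is area measure on D, dσ is arc-length measure on the boundary circle ∂D, and ∂/∂n_t denotes the outward normal derivative at t ∈ ∂D. -/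
/-!
The kernel `log |s - t|` is replaced by `L = ½ log (|t - s|² + ε²)`, which is smooth, and the
divergence theorem is applied on the disc to the field `f ∇L - L ∇f`. This field is continuous near
the closed disc and differentiable off the real axis, with divergence `f ΔL - L g` there, and the
right-hand side is continuous across the axis. As `ε → 0`, `ΔL` acts as `2 π` times an approximate
identity at `s` (`tendsto_integral_peak`), the volume integral of `L g` converges by dominated
convergence (`tendsto_integral_regLog`), and the boundary terms converge because `s` lies off the
circle.

What makes the singular behaviour of the second derivatives on the real axis harmless is that a
continuous field carries no divergence on a line: applying the box divergence theorem above and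
below the axis, the two boundary terms along the axis cancel (`integral_div_eq_zero`). Boxes suit
compactly supported fields on the plane but not discs, so the divergence theorem on a disc
(`disc_divergence`) is deduced by testing against radial cutoffs `ψ (|z - c|²)` and passing to polar
coordinates. For each radius `ρ` let `E ρ` be the integral of the divergence over the disc of radius
`ρ` minus the flux through its boundary; the weak identity then says that `E` is orthogonal to all
radial weights, and choosing the weight to be a positive multiple of `E` itself forces `E = 0`.
-/

open Filter Topology MeasureTheory
open scoped Real

noncomputable section

/-- The real axis inside `ℂ`. -/
def realAxis : Set ℂ := {z : ℂ | z.im = 0}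

/-- The Laplacian `Δf = ∂²f/∂σ² + ∂²f/∂t²` of `f : ℂ → ℝ`, `s = σ + it`. -/
def lapl (f : ℂ → ℝ) (z : ℂ) : ℝ :=
  fderiv ℝ (fun w => fderiv ℝ f w 1) z 1 +
    fderiv ℝ (fun w => fderiv ℝ f w Complex.I) z Complex.I

/-! ### The divergence theorem across the real axis -/

open Set in
/-- The divergence theorem on the rectangle `[-R, R] × [a, b]`, whose interior misses the real
axis, for a field `(P, Q)` whose first component vanishes on the vertical sides: only the
horizontal sides contribute. Differentiability is needed in the interior only, so one horizontal
side may lie on the real axis. -/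
theorem integral_rect_div (P Q : ℂ → ℝ) (hP : Continuous P) (hQ : Continuous Q)
    (dP : ∀ z : ℂ, z.im ≠ 0 → DifferentiableAt ℝ P z)
    (dQ : ∀ z : ℂ, z.im ≠ 0 → DifferentiableAt ℝ Q z)
    (hI : Integrable (fun p : ℝ × ℝ =>
      fderiv ℝ P (Complex.equivRealProdCLM.symm p) 1 +
        fderiv ℝ Q (Complex.equivRealProdCLM.symm p) Complex.I))
    (R a b : ℝ) (hR : 0 ≤ R) (hab : a ≤ b) (h0 : ∀ y ∈ Ioo a b, y ≠ 0)
    (hP0 : ∀ z : ℂ, R ≤ ‖z‖ → P z = 0) :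
    ∫ p in Icc (-R, a) (R, b), (fderiv ℝ P (Complex.equivRealProdCLM.symm p) 1 +
        fderiv ℝ Q (Complex.equivRealProdCLM.symm p) Complex.I) =
      (∫ x in (-R)..R, Q ⟨x, b⟩) - ∫ x in (-R)..R, Q ⟨x, a⟩ := by
  set e := Complex.equivRealProdCLM.symm with he
  have e1 : e (1, 0) = 1 := by
    simp [he, Complex.equivRealProdCLM_symm_apply]
  have e2 : e (0, 1) = Complex.I := by
    simp [he, Complex.equivRealProdCLM_symm_apply]
  have e3 : ∀ x y, e (x, y) = ⟨x, y⟩ := by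
    intro x y
    rw [he, Complex.equivRealProdCLM_symm_apply]
    apply Complex.ext <;> simp
  have key := integral_divergence_prod_Icc_of_hasFDerivAt_of_le
    (fun p => P (e p)) (fun p => Q (e p))
    (fun p => (fderiv ℝ P (e p)).comp (e : ℝ × ℝ →L[ℝ] ℂ))
    (fun p => (fderiv ℝ Q (e p)).comp (e : ℝ × ℝ →L[ℝ] ℂ))
    (-R, a) (R, b) (by simp [Prod.le_def, hab]; linarith)
    (by fun_prop) (by fun_prop) ?_ ?_ ?_
  · simp only [ContinuousLinearMap.comp_apply, ContinuousLinearEquiv.coe_coe, e1, e2] at key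
    simp only [e3] at key ⊢
    rw [key]
    have z1 : ∀ y : ℝ, P ⟨R, y⟩ = 0 := fun y => hP0 _ (by
      simpa [abs_of_nonneg hR] using Complex.abs_re_le_norm ⟨R, y⟩)
    have z2 : ∀ y : ℝ, P ⟨-R, y⟩ = 0 := fun y => hP0 _ (by
      simpa [abs_of_nonneg hR] using Complex.abs_re_le_norm ⟨-R, y⟩)
    simp [z1, z2]
  · rintro ⟨x, y⟩ ⟨-, hy⟩
    refine (dP _ ?_).hasFDerivAt.comp (x, y) e.hasFDerivAt
    rw [e3]
    exact h0 y hy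
  · rintro ⟨x, y⟩ ⟨-, hy⟩
    refine (dQ _ ?_).hasFDerivAt.comp (x, y) e.hasFDerivAt
    rw [e3]
    exact h0 y hy
  · simp only [ContinuousLinearMap.comp_apply, ContinuousLinearEquiv.coe_coe, e1, e2]
    exact hI.integrableOn

/-- The real axis is a null set. -/
theorem ae_im_ne_zero : ∀ᵐ z : ℂ, z.im ≠ 0 := by
  have := Measure.addHaar_submodule (volume : Measure ℂ) (LinearMap.ker Complex.imLm) (by
    rw [Ne, LinearMap.ker_eq_top]
    intro h
    have : Complex.imLm Complex.I = (0 : ℂ →ₗ[ℝ] ℝ) Complex.I := by rw [h]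
    simp at this)
  rw [ae_iff]
  convert! this using 2
  ext z
  simp

open Set in
/-- A compactly supported continuous field `(P, Q)` on the plane which is differentiable off the
real axis, with integrable divergence `W`, satisfies `∫ W = 0`. The support is covered by a
rectangle above and one below the real axis; by continuity of `Q` their boundary terms along the
axis cancel. No second-order or differentiability information on the axis itself is used. -/
theorem integral_div_eq_zero (P Q W : ℂ → ℝ) (hP : Continuous P) (hQ : Continuous Q)
    (sP : HasCompactSupport P) (sQ : HasCompactSupport Q)
    (dP : ∀ z : ℂ, z.im ≠ 0 → DifferentiableAt ℝ P z)
    (dQ : ∀ z : ℂ, z.im ≠ 0 → DifferentiableAt ℝ Q z)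
    (hW : Integrable W)
    (h : ∀ z : ℂ, z.im ≠ 0 → W z = fderiv ℝ P z 1 + fderiv ℝ Q z Complex.I) :
    ∫ z, W z = 0 := by
  set e := Complex.equivRealProdCLM.symm with he
  set D : ℂ → ℝ := fun z => fderiv ℝ P z 1 + fderiv ℝ Q z Complex.I with hD
  have hWD : W =ᵐ[volume] D := by
    filter_upwards [ae_im_ne_zero] with z hz using h z hz
  have hDI : Integrable D := hW.congr hWD
  rw [integral_congr_ae hWD]
  have mp := Complex.volume_preserving_equiv_real_prod.symm
  have hI : Integrable (fun p : ℝ × ℝ => D (e p)) :=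
    (mp.integrable_comp_emb Complex.measurableEquivRealProd.symm.measurableEmbedding).2 hDI
  have hint : ∫ p : ℝ × ℝ, D (e p) = ∫ z, D z :=
    mp.integral_comp Complex.measurableEquivRealProd.symm.measurableEmbedding D
  rw [← hint]
  obtain ⟨R, hR, hR'⟩ : ∃ R, 0 < R ∧ ∀ z : ℂ, R ≤ ‖z‖ → z ∉ tsupport P ∧ z ∉ tsupport Q := by
    obtain ⟨r1, h1⟩ := sP.isCompact.isBounded.subset_ball 0
    obtain ⟨r2, h2⟩ := sQ.isCompact.isBounded.subset_ball 0
    refine ⟨max 1 (max r1 r2), by positivity, fun z hz => ⟨fun h => ?_, fun h => ?_⟩⟩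
    · have := h1 h
      simp at this hz
      linarith
    · have := h2 h
      simp at this hz
      linarith
  have P0 : ∀ z : ℂ, R ≤ ‖z‖ → P z = 0 := fun z hz => image_eq_zero_of_notMem_tsupport (hR' z hz).1
  have Q0 : ∀ z : ℂ, R ≤ ‖z‖ → Q z = 0 := fun z hz => image_eq_zero_of_notMem_tsupport (hR' z hz).2
  have D0 : ∀ z : ℂ, R ≤ ‖z‖ → D z = 0 := fun z hz => by
    have h1 : fderiv ℝ P z = 0 := by
      by_contra hh
      exact (hR' z hz).1 (support_fderiv_subset ℝ hh)
    have h2 : fderiv ℝ Q z = 0 := by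
      by_contra hh
      exact (hR' z hz).2 (support_fderiv_subset ℝ hh)
    simp [hD, h1, h2]
  have r1 := integral_rect_div P Q hP hQ dP dQ hI R 0 R hR.le hR.le
    (fun y hy => hy.1.ne') P0
  have r2 := integral_rect_div P Q hP hQ dP dQ hI R (-R) 0 hR.le (by linarith)
    (fun y hy => hy.2.ne) P0
  have q1 : ∀ x : ℝ, Q ⟨x, R⟩ = 0 := fun x => Q0 _ (by
    simpa [abs_of_pos hR] using Complex.abs_im_le_norm ⟨x, R⟩)
  have q2 : ∀ x : ℝ, Q ⟨x, -R⟩ = 0 := fun x => Q0 _ (by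
    simpa [abs_of_pos hR] using Complex.abs_im_le_norm ⟨x, -R⟩)
  simp only [q1, q2, intervalIntegral.integral_zero, zero_sub, sub_zero] at r1 r2
  have hu : ∫ p : ℝ × ℝ, D (e p) =
      ∫ p in Icc (-R, 0) (R, R) ∪ Icc (-R, -R) (R, 0), D (e p) := by
    symm
    apply setIntegral_eq_integral_of_forall_compl_eq_zero
    rintro ⟨x, y⟩ hxy
    apply D0
    by_contra! hlt
    have h1 := (Complex.abs_re_le_norm (e (x, y))).trans hlt.le
    have h2 := (Complex.abs_im_le_norm (e (x, y))).trans hlt.le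
    simp [he, Complex.equivRealProdCLM_symm_apply, abs_le] at h1 h2
    apply hxy
    rcases le_total 0 y with hy | hy
    · left; simp [Prod.le_def]; tauto
    · right; simp [Prod.le_def]; tauto
  -- The two rectangles overlap only in a segment of the real axis, a null set.
  rw [hu, setIntegral_union₀ ?_ measurableSet_Icc.nullMeasurableSet hI.integrableOn
    hI.integrableOn]
  · rw [r1, r2]; ring
  · have : (volume : Measure (ℝ × ℝ)) (univ ×ˢ {0}) = 0 := by
      rw [Measure.volume_eq_prod, Measure.prod_prod]; simp
    refine measure_mono_null ?_ this
    rintro ⟨x, y⟩ ⟨h1, h2⟩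
    simp [Prod.le_def] at h1 h2 ⊢
    linarith

/-! ### Polar coordinates on a disc -/

theorem dist_circleMap (c : ℂ) (ρ θ : ℝ) : dist (circleMap c ρ θ) c = |ρ| := by
  simp [dist_eq_norm]

open Set in
/-- Integration over a disc in polar coordinates about its centre. -/
theorem integral_ball_polar (h : ℂ → ℝ) (c : ℂ) (R : ℝ) (hR : 0 ≤ R)
    (hc : ContinuousOn h (Metric.closedBall c R)) :
    ∫ z in Metric.ball c R, h z =
      ∫ ρ in (0:ℝ)..R, ρ * ∫ θ in (-π)..π, h (circleMap c ρ θ) := by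
  have hcirc : ∀ p : ℝ × ℝ, c + Complex.polarCoord.symm p = circleMap c p.1 p.2 := by
    intro p
    simp [circleMap, Complex.exp_mul_I]
  have hcm : Continuous (fun p : ℝ × ℝ => circleMap c p.1 p.2) := by
    unfold circleMap; fun_prop
  rw [← integral_indicator Metric.isOpen_ball.measurableSet,
    ← integral_add_left_eq_self _ c, ← Complex.integral_comp_polarCoord_symm]
  simp only [hcirc]
  have hpc : ContinuousOn (fun p : ℝ × ℝ => p.1 * h (circleMap c p.1 p.2))
      (Icc 0 R ×ˢ Icc (-π) π) := by
    refine continuousOn_fst.mul (hc.comp hcm.continuousOn ?_)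
    rintro ⟨ρ, θ⟩ ⟨hρ, -⟩
    rw [Metric.mem_closedBall, dist_circleMap, abs_of_nonneg hρ.1]
    exact hρ.2
  have hi : IntegrableOn (fun p : ℝ × ℝ => p.1 * h (circleMap c p.1 p.2))
      (Ioo 0 R ×ˢ Ioo (-π) π) :=
    (hpc.integrableOn_compact (isCompact_Icc.prod isCompact_Icc)).mono_set
      (prod_mono Ioo_subset_Icc_self Ioo_subset_Icc_self)
  have hsub : Ioo 0 R ×ˢ Ioo (-π) π ⊆ polarCoord.target := by
    rintro ⟨ρ, θ⟩ ⟨hρ, hθ⟩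
    exact ⟨hρ.1, hθ⟩
  rw [setIntegral_eq_of_subset_of_forall_sdiff_eq_zero
    polarCoord.open_target.measurableSet hsub]
  · have : ∫ p in Ioo 0 R ×ˢ Ioo (-π) π,
        p.1 • (Metric.ball c R).indicator h (circleMap c p.1 p.2) =
        ∫ p in Ioo 0 R ×ˢ Ioo (-π) π, p.1 * h (circleMap c p.1 p.2) := by
      refine setIntegral_congr_fun (measurableSet_Ioo.prod measurableSet_Ioo) ?_
      rintro ⟨ρ, θ⟩ ⟨hρ, -⟩
      have : circleMap c ρ θ ∈ Metric.ball c R := by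
        rw [Metric.mem_ball, dist_circleMap, abs_of_pos hρ.1]
        exact hρ.2
      simp [indicator_of_mem this]
    rw [this, Measure.volume_eq_prod, setIntegral_prod _ hi, intervalIntegral.integral_of_le hR,
      integral_Ioc_eq_integral_Ioo]
    refine setIntegral_congr_fun measurableSet_Ioo fun ρ _ => ?_
    simp only
    rw [integral_const_mul, intervalIntegral.integral_of_le (by linarith [Real.pi_pos]),
      integral_Ioc_eq_integral_Ioo]
  · rintro ⟨ρ, θ⟩ ⟨⟨hρ, hθ⟩, hn⟩
    have : circleMap c ρ θ ∉ Metric.ball c R := by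
      intro hh
      rw [Metric.mem_ball, dist_circleMap, abs_of_pos (show 0 < ρ from hρ)] at hh
      exact hn ⟨⟨hρ, hh⟩, hθ⟩
    simp [indicator_of_notMem this]

/-- The angular integral over circles of radius `ρ ∈ [0, R]` is continuous in `ρ`. -/
theorem continuousOn_circle_integral (h : ℂ → ℝ) (u : ℝ → ℝ) (hu : Continuous u) (c : ℂ) (R : ℝ)
    (hR : 0 ≤ R) (hc : ContinuousOn h (Metric.closedBall c R)) :
    ContinuousOn (fun ρ : ℝ => ∫ θ in (-π)..π, u θ * h (circleMap c ρ θ)) (Set.Icc 0 R) := by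
  have hcm : Continuous (fun p : ℝ × ℝ => circleMap c (Set.projIcc 0 R hR p.1) p.2) := by
    unfold circleMap; fun_prop
  have h1 : Continuous (fun p : ℝ × ℝ => h (circleMap c (Set.projIcc 0 R hR p.1) p.2)) := by
    refine hc.comp_continuous hcm fun p => ?_
    have := (Set.projIcc 0 R hR p.1).2
    rw [Metric.mem_closedBall, dist_circleMap, abs_of_nonneg this.1]
    exact this.2
  have h2 : Continuous (fun ρ : ℝ =>
      ∫ θ in (-π)..π, u θ * h (circleMap c (Set.projIcc 0 R hR ρ) θ)) := by
    apply intervalIntegral.continuous_parametric_intervalIntegral_of_continuous'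
    exact (hu.comp continuous_snd).mul h1
  refine h2.continuousOn.congr fun ρ hρ => ?_
  simp [Set.projIcc_of_mem hR hρ]

/-! ### The divergence theorem on a disc -/

/-- A cutoff supported in a closed disc inside the open set `U` extends a function continuous on
`U` by zero to a continuous function on the plane. -/
theorem continuous_cutoff_mul {U : Set ℂ} (hU : IsOpen U) {c : ℂ} {r : ℝ}
    (hrU : Metric.closedBall c r ⊆ U) {χ P : ℂ → ℝ} (hχ : Continuous χ)
    (hP : ContinuousOn P U) (h0 : ∀ z ∉ Metric.closedBall c r, χ z = 0) :
    Continuous (fun z => χ z * P z) := by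
  rw [continuous_iff_continuousAt]
  intro z
  by_cases hz : z ∈ U
  · exact hχ.continuousAt.mul (hP.continuousAt (hU.mem_nhds hz))
  · have hz' : z ∈ (Metric.closedBall c r)ᶜ := fun h => hz (hrU h)
    have : (fun z => χ z * P z) =ᶠ[𝓝 z] fun _ => 0 := by
      filter_upwards [Metric.isClosed_closedBall.isOpen_compl.mem_nhds hz'] with w hw
      simp [h0 w hw]
    exact this.continuousAt

theorem hasCompactSupport_cutoff_mul {c : ℂ} {r : ℝ}
    {χ P : ℂ → ℝ} (h0 : ∀ z ∉ Metric.closedBall c r, χ z = 0) :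
    HasCompactSupport (fun z => χ z * P z) :=
  HasCompactSupport.intro (isCompact_closedBall c r) fun z hz => by simp [h0 z hz]

/-- The product rule for a cutoff supported in a closed disc inside `U`. It holds outside `U` too,
where both sides vanish, with `fderiv ℝ P z` possibly a junk value multiplied by `0`. -/
theorem hasFDerivAt_cutoff_mul {U : Set ℂ} {c : ℂ} {r : ℝ}
    (hrU : Metric.closedBall c r ⊆ U) {χ P : ℂ → ℝ} {χ' : ℂ → ℂ →L[ℝ] ℝ}
    (hχ : ∀ z, HasFDerivAt χ (χ' z) z)
    (h0 : ∀ z ∉ Metric.closedBall c r, χ z = 0) (z : ℂ)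
    (hP : z ∈ U → DifferentiableAt ℝ P z) :
    HasFDerivAt (fun z => χ z * P z) (χ z • fderiv ℝ P z + P z • χ' z) z := by
  by_cases hz : z ∈ U
  · exact (hχ z).mul (hP hz).hasFDerivAt
  · have hz' : z ∈ (Metric.closedBall c r)ᶜ := fun h => hz (hrU h)
    have hn := Metric.isClosed_closedBall.isOpen_compl.mem_nhds hz'
    have h1 : (fun z => χ z * P z) =ᶠ[𝓝 z] fun _ => 0 := by
      filter_upwards [hn] with w hw
      simp [h0 w hw]
    have h2 : χ =ᶠ[𝓝 z] fun _ => 0 := by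
      filter_upwards [hn] with w hw
      simp [h0 w hw]
    have h3 : χ' z = 0 := (hχ z).unique ((hasFDerivAt_const (0:ℝ) z).congr_of_eventuallyEq h2)
    rw [h0 z hz', h3]
    simpa using (hasFDerivAt_const (0:ℝ) z).congr_of_eventuallyEq h1

theorem hasFDerivAt_sq_dist (c z : ℂ) :
    HasFDerivAt (fun z : ℂ => (z.re - c.re) ^ 2 + (z.im - c.im) ^ 2)
      ((2 * (z.re - c.re)) • Complex.reCLM + (2 * (z.im - c.im)) • Complex.imCLM) z := by
  have h1 : HasFDerivAt (fun z : ℂ => z.re - c.re) Complex.reCLM z :=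
    Complex.reCLM.hasFDerivAt.sub_const _
  have h2 : HasFDerivAt (fun z : ℂ => z.im - c.im) Complex.imCLM z :=
    Complex.imCLM.hasFDerivAt.sub_const _
  convert! (h1.pow 2).add (h2.pow 2) using 1
  ext; simp

theorem sq_dist_circleMap (c : ℂ) (ρ θ : ℝ) :
    ((circleMap c ρ θ).re - c.re) ^ 2 + ((circleMap c ρ θ).im - c.im) ^ 2 = ρ ^ 2 := by
  have := Real.cos_sq_add_sin_sq θ
  simp [circleMap, Complex.exp_mul_I, ← Complex.ofReal_cos, ← Complex.ofReal_sin]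
  linear_combination ρ ^ 2 * this

/-- The divergence theorem tested against the radial function `χ z = ψ (|z - c|²)`, where
`ψ' = -κ` and `ψ`, `κ` vanish beyond `R²`: the identity `∫ div (χ P, χ Q) = 0` written in polar
coordinates about `c`. The factor `2 ρ κ (ρ²)` is minus the radial derivative of `χ`, and the
integrals against `cos θ`, `sin θ` form the flux of `(P, Q)` through the circle of radius `ρ`. -/
theorem radial_weak_divergence {U : Set ℂ} (hU : IsOpen U) {c : ℂ} {R : ℝ} (hR : 0 < R)
    (hRU : Metric.closedBall c R ⊆ U) {P Q h : ℂ → ℝ} (hP : ContinuousOn P U)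
    (hQ : ContinuousOn Q U) (hh : ContinuousOn h U)
    (dP : ∀ z ∈ U, z.im ≠ 0 → DifferentiableAt ℝ P z)
    (dQ : ∀ z ∈ U, z.im ≠ 0 → DifferentiableAt ℝ Q z)
    (hdiv : ∀ z ∈ U, z.im ≠ 0 → h z = fderiv ℝ P z 1 + fderiv ℝ Q z Complex.I)
    {κ ψ : ℝ → ℝ} (hκ : Continuous κ) (hψ : ∀ u, HasDerivAt ψ (-κ u) u)
    (κ0 : ∀ u, R ^ 2 ≤ u → κ u = 0) (ψ0 : ∀ u, R ^ 2 ≤ u → ψ u = 0) :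
    ∫ ρ in (0:ℝ)..R, ρ * (ψ (ρ ^ 2) * (∫ θ in (-π)..π, h (circleMap c ρ θ)) -
      2 * ρ * κ (ρ ^ 2) * ((∫ θ in (-π)..π, Real.cos θ * P (circleMap c ρ θ)) +
        ∫ θ in (-π)..π, Real.sin θ * Q (circleMap c ρ θ))) = 0 := by
  set N : ℂ → ℝ := fun z => (z.re - c.re) ^ 2 + (z.im - c.im) ^ 2 with hN
  have cN : Continuous N := by fun_prop
  have hNd : ∀ z, N z = dist z c ^ 2 := fun z => by
    rw [hN, dist_eq_norm, ← Complex.normSq_eq_norm_sq, Complex.normSq_apply]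
    simp; ring
  have hN0 : ∀ z ∉ Metric.ball c R, R ^ 2 ≤ N z := fun z hz => by
    rw [hNd]
    simp at hz
    gcongr
  have hN1 : ∀ z ∉ Metric.closedBall c R, R ^ 2 ≤ N z := fun z hz =>
    hN0 z fun h => hz (Metric.ball_subset_closedBall h)
  have cψ : Continuous ψ := continuous_iff_continuousAt.2 fun u => (hψ u).continuousAt
  set χ : ℂ → ℝ := fun z => ψ (N z) with hχ
  have cχ : Continuous χ := cψ.comp cN
  have χ0 : ∀ z ∉ Metric.closedBall c R, χ z = 0 := fun z hz => ψ0 _ (hN1 z hz)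
  have dχ : ∀ z, HasFDerivAt χ ((-κ (N z)) • ((2 * (z.re - c.re)) • Complex.reCLM +
      (2 * (z.im - c.im)) • Complex.imCLM)) z := fun z =>
    (hψ (N z)).comp_hasFDerivAt z (hasFDerivAt_sq_dist c z)
  have fP := fun z (hz : z.im ≠ 0) => hasFDerivAt_cutoff_mul hRU dχ χ0 z (fun h => dP z h hz)
  have fQ := fun z (hz : z.im ≠ 0) => hasFDerivAt_cutoff_mul hRU dχ χ0 z (fun h => dQ z h hz)
  set W : ℂ → ℝ := fun z => χ z * h z + ((-κ (N z) * (2 * (z.re - c.re))) * P z +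
    (-κ (N z) * (2 * (z.im - c.im))) * Q z) with hW
  have c1 : Continuous fun z : ℂ => -κ (N z) * (2 * (z.re - c.re)) := by fun_prop
  have c2 : Continuous fun z : ℂ => -κ (N z) * (2 * (z.im - c.im)) := by fun_prop
  have z1 : ∀ z ∉ Metric.closedBall c R, -κ (N z) * (2 * (z.re - c.re)) = 0 := fun z hz => by
    rw [κ0 _ (hN1 z hz)]; simp
  have z2 : ∀ z ∉ Metric.closedBall c R, -κ (N z) * (2 * (z.im - c.im)) = 0 := fun z hz => by
    rw [κ0 _ (hN1 z hz)]; simp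
  have cW : Continuous W := (continuous_cutoff_mul hU hRU cχ hh χ0).add
    ((continuous_cutoff_mul hU hRU c1 hP z1).add (continuous_cutoff_mul hU hRU c2 hQ z2))
  have sW : HasCompactSupport W := (hasCompactSupport_cutoff_mul χ0).add
    ((hasCompactSupport_cutoff_mul z1).add (hasCompactSupport_cutoff_mul z2))
  have key := integral_div_eq_zero (fun z => χ z * P z) (fun z => χ z * Q z) W
    (continuous_cutoff_mul hU hRU cχ hP χ0) (continuous_cutoff_mul hU hRU cχ hQ χ0)
    (hasCompactSupport_cutoff_mul χ0) (hasCompactSupport_cutoff_mul χ0)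
    (fun z hz => (fP z hz).differentiableAt) (fun z hz => (fQ z hz).differentiableAt)
    (cW.integrable_of_hasCompactSupport sW) (fun z hz => by
      rw [(fP z hz).fderiv, (fQ z hz).fderiv]
      by_cases hzU : z ∈ U
      · simp [hW, hdiv z hzU hz]; ring
      · have := hN1 z (fun h => hzU (hRU h))
        simp [hW, hχ, κ0 _ this, ψ0 _ this])
  rw [← setIntegral_eq_integral_of_forall_compl_eq_zero (μ := volume) (f := W) (s := Metric.ball c R) (fun z hz => by
    simp [hW, hχ, κ0 _ (hN0 z hz), ψ0 _ (hN0 z hz)]),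
    integral_ball_polar W c R hR.le cW.continuousOn] at key
  refine Eq.trans ?_ key
  refine intervalIntegral.integral_congr fun ρ hρ => ?_
  rw [Set.uIcc_of_le hR.le] at hρ
  have hcirc : ∀ F : ℂ → ℝ, ContinuousOn F U → Continuous fun θ => F (circleMap c ρ θ) := by
    intro F hF
    refine hF.comp_continuous (continuous_circleMap c ρ) fun θ => hRU ?_
    rw [Metric.mem_closedBall, dist_circleMap, abs_of_nonneg hρ.1]
    exact hρ.2
  have hWc : ∀ θ, W (circleMap c ρ θ) = ψ (ρ ^ 2) * h (circleMap c ρ θ) -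
      2 * ρ * κ (ρ ^ 2) * (Real.cos θ * P (circleMap c ρ θ) +
        Real.sin θ * Q (circleMap c ρ θ)) := by
    intro θ
    have e1 : (circleMap c ρ θ).re - c.re = ρ * Real.cos θ := by
      simp [circleMap, Complex.exp_mul_I, ← Complex.ofReal_cos, ← Complex.ofReal_sin]
    have e2 : (circleMap c ρ θ).im - c.im = ρ * Real.sin θ := by
      simp [circleMap, Complex.exp_mul_I, ← Complex.ofReal_cos, ← Complex.ofReal_sin]
    have e3 : N (circleMap c ρ θ) = ρ ^ 2 := sq_dist_circleMap c ρ θ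
    simp only [hW, hχ, e1, e2, e3]
    ring
  simp only [hWc]
  have i1 := (hcirc h hh)
  have i2 := Real.continuous_cos.mul (hcirc P hP)
  have i3 := Real.continuous_sin.mul (hcirc Q hQ)
  rw [intervalIntegral.integral_sub, intervalIntegral.integral_const_mul,
    intervalIntegral.integral_const_mul, intervalIntegral.integral_add]
  · exact i2.intervalIntegrable _ _
  · exact i3.intervalIntegrable _ _
  · exact (continuous_const.mul i1).intervalIntegrable _ _
  · exact (continuous_const.mul (i2.add i3)).intervalIntegrable _ _

/-- The divergence theorem on a disc for a field `(P, Q)` continuous on a neighbourhood of the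
closed disc, differentiable off the real axis, whose divergence there agrees with a continuous
function `h`. Let `E ρ` be the difference between the integral of `h` over the disc of radius `ρ`
and the flux through its boundary. Integrating `radial_weak_divergence` by parts gives
`∫ 2 ρ κ (ρ²) E ρ dρ = 0` for every admissible `κ`, and a suitable choice of `κ` makes the
integrand a positive weight times `E ρ ^ 2`. -/
theorem disc_divergence {U : Set ℂ} (hU : IsOpen U) {c : ℂ} {r R : ℝ} (hr : 0 < r) (hrR : r < R)
    (hRU : Metric.closedBall c R ⊆ U) {P Q h : ℂ → ℝ} (hP : ContinuousOn P U)
    (hQ : ContinuousOn Q U) (hh : ContinuousOn h U)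
    (dP : ∀ z ∈ U, z.im ≠ 0 → DifferentiableAt ℝ P z)
    (dQ : ∀ z ∈ U, z.im ≠ 0 → DifferentiableAt ℝ Q z)
    (hdiv : ∀ z ∈ U, z.im ≠ 0 → h z = fderiv ℝ P z 1 + fderiv ℝ Q z Complex.I) :
    ∫ z in Metric.ball c r, h z =
      r * ((∫ θ in (-π)..π, Real.cos θ * P (circleMap c r θ)) +
        ∫ θ in (-π)..π, Real.sin θ * Q (circleMap c r θ)) := by
  have hR : 0 < R := hr.trans hrR
  set b : ℝ → ℝ := fun ρ => ρ * ∫ θ in (-π)..π, h (circleMap c ρ θ) with hb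
  set A : ℝ → ℝ := fun ρ => ρ * ((∫ θ in (-π)..π, Real.cos θ * P (circleMap c ρ θ)) +
        ∫ θ in (-π)..π, Real.sin θ * Q (circleMap c ρ θ)) with hA
  have cb : ContinuousOn b (Set.Icc 0 R) := by
    have := continuousOn_circle_integral h (fun _ => 1) continuous_const c R hR.le (hh.mono hRU)
    simp only [one_mul] at this
    exact continuousOn_id.mul this
  have cA : ContinuousOn A (Set.Icc 0 R) :=
    continuousOn_id.mul
      ((continuousOn_circle_integral P _ Real.continuous_cos c R hR.le (hP.mono hRU)).add
      (continuousOn_circle_integral Q _ Real.continuous_sin c R hR.le (hQ.mono hRU)))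
  -- Precomposing with the projection `p` onto `[0, R]` extends `b` and `A` continuously to the
  -- line, so that the fundamental theorem of calculus applies at every point.
  set p : ℝ → ℝ := fun ρ => Set.projIcc 0 R hR.le ρ with hp
  have hp1 : ∀ ρ, p ρ ∈ Set.Icc 0 R := fun ρ => (Set.projIcc 0 R hR.le ρ).2
  have hp2 : ∀ ρ ∈ Set.Icc 0 R, p ρ = ρ := fun ρ hρ => by simp [hp, Set.projIcc_of_mem hR.le hρ]
  have cp : Continuous p := by fun_prop
  set b' : ℝ → ℝ := fun ρ => b (p ρ) with hb'
  have cb' : Continuous b' := cb.comp_continuous cp hp1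
  set B : ℝ → ℝ := fun ρ => ∫ x in (0:ℝ)..ρ, b' x with hB
  have dB : ∀ ρ, HasDerivAt B (b' ρ) ρ := fun ρ => cb'.integral_hasStrictDerivAt 0 ρ |>.hasDerivAt
  have cB : Continuous B := continuous_iff_continuousAt.2 fun u => (dB u).continuousAt
  set E : ℝ → ℝ := fun ρ => B ρ - A (p ρ) with hE
  have cE : Continuous E := cB.sub (cA.comp_continuous cp hp1)
  -- the weight `κ` is chosen so that the weak identity integrates a nonnegative multiple of `E ^ 2`
  set κ : ℝ → ℝ := fun u => max 0 (R ^ 2 - u) * E (√u) with hκ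
  have cκ : Continuous κ := by fun_prop
  set ψ : ℝ → ℝ := fun u => (∫ x in (0:ℝ)..R ^ 2, κ x) - ∫ x in (0:ℝ)..u, κ x with hψ
  have dψ : ∀ u, HasDerivAt ψ (-κ u) u := fun u =>
    (cκ.integral_hasStrictDerivAt 0 u).hasDerivAt.const_sub _
  have κ0 : ∀ u, R ^ 2 ≤ u → κ u = 0 := fun u hu => by
    simp [hκ, max_eq_left (sub_nonpos.2 hu)]
  have ψ0 : ∀ u, R ^ 2 ≤ u → ψ u = 0 := fun u hu => by
    rw [hψ]
    simp only
    rw [intervalIntegral.integral_interval_sub_left (cκ.intervalIntegrable _ _)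
      (cκ.intervalIntegrable _ _), intervalIntegral.integral_symm,
      intervalIntegral.integral_congr (g := fun _ => 0)]
    · simp
    · intro x hx
      rw [Set.uIcc_of_le hu] at hx
      exact κ0 x hx.1
  have weak := radial_weak_divergence hU hR hRU hP hQ hh dP dQ hdiv cκ dψ κ0 ψ0
  have cψ : Continuous ψ := continuous_iff_continuousAt.2 fun u => (dψ u).continuousAt
  -- The boundary terms of the integration by parts vanish since `ψ (R²) = 0` and `B 0 = 0`.
  have parts : ∫ ρ in (0:ℝ)..R, (-κ (ρ ^ 2) * (2 * ρ) * B ρ + ψ (ρ ^ 2) * b' ρ) = 0 := by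
    have hd : ∀ ρ, HasDerivAt (fun ρ => ψ (ρ ^ 2) * B ρ)
        (-κ (ρ ^ 2) * (2 * ρ) * B ρ + ψ (ρ ^ 2) * b' ρ) ρ := fun ρ => by
      have h2 : HasDerivAt (fun ρ : ℝ => ρ ^ 2) (2 * ρ) ρ := by simpa using hasDerivAt_pow 2 ρ
      exact ((dψ (ρ ^ 2)).comp ρ h2).mul (dB ρ)
    rw [intervalIntegral.integral_eq_sub_of_hasDerivAt (fun ρ _ => hd ρ)
      (Continuous.intervalIntegrable (by fun_prop) _ _)]
    simp [ψ0 _ le_rfl, hB]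
  have sq : ∫ ρ in (0:ℝ)..R, 2 * ρ * max 0 (R ^ 2 - ρ ^ 2) * E ρ ^ 2 = 0 := by
    have hcont : Continuous fun ρ => ψ (ρ ^ 2) * b' ρ - 2 * ρ * κ (ρ ^ 2) * A (p ρ) := by
      have h1 : Continuous fun ρ => ψ (ρ ^ 2) * b' ρ := by fun_prop
      have h2 : Continuous fun ρ => 2 * ρ * κ (ρ ^ 2) := by fun_prop
      exact h1.sub (h2.mul (cA.comp_continuous cp hp1))
    have weak' : ∫ ρ in (0:ℝ)..R, (ψ (ρ ^ 2) * b' ρ - 2 * ρ * κ (ρ ^ 2) * A (p ρ)) = 0 := by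
      refine Eq.trans ?_ weak
      refine intervalIntegral.integral_congr fun ρ hρ => ?_
      rw [Set.uIcc_of_le hR.le] at hρ
      simp only [hb', hb, hA, hp2 ρ hρ]
      ring
    have : ∫ ρ in (0:ℝ)..R, 2 * ρ * max 0 (R ^ 2 - ρ ^ 2) * E ρ ^ 2 =
        (∫ ρ in (0:ℝ)..R, (ψ (ρ ^ 2) * b' ρ - 2 * ρ * κ (ρ ^ 2) * A (p ρ))) -
        ∫ ρ in (0:ℝ)..R, (-κ (ρ ^ 2) * (2 * ρ) * B ρ + ψ (ρ ^ 2) * b' ρ) := by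
      rw [← intervalIntegral.integral_sub (hcont.intervalIntegrable _ _)
        (Continuous.intervalIntegrable (by fun_prop) _ _)]
      refine intervalIntegral.integral_congr fun ρ hρ => ?_
      rw [Set.uIcc_of_le hR.le] at hρ
      simp only [hκ, Real.sqrt_sq hρ.1, hE]
      ring
    rw [this, weak', parts, sub_zero]
  have hEr : E r = 0 := by
    by_contra hne
    refine (intervalIntegral.integral_pos hR (Continuous.continuousOn (by fun_prop)) ?_
      ⟨r, ⟨hr.le, hrR.le⟩, ?_⟩).ne' sq
    · intro ρ hρ
      have := hρ.1
      positivity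
    · have : 0 < max 0 (R ^ 2 - r ^ 2) := by
        apply lt_max_of_lt_right
        nlinarith
      positivity
  have hr' : r ∈ Set.Icc 0 R := ⟨hr.le, hrR.le⟩
  rw [integral_ball_polar h c r hr.le
    (hh.mono ((Metric.closedBall_subset_closedBall hrR.le).trans hRU))]
  have : B r = A r := by
    have := sub_eq_zero.1 hEr
    rwa [hp2 r hr'] at this
  rw [show r * _ = A r from rfl, ← this]
  refine intervalIntegral.integral_congr fun ρ hρ => ?_
  rw [Set.uIcc_of_le hr.le] at hρ
  simp only [hb', hb, hp2 ρ ⟨hρ.1, hρ.2.trans hrR.le⟩]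

/-! ### The regularised logarithmic kernel -/

/-- The regularised kernel `½ log (|t - s|² + ε²)`, smooth for `ε ≠ 0` and equal to
`log |s - t|` for `ε = 0`. -/
def regLog (s : ℂ) (ε : ℝ) (t : ℂ) : ℝ :=
  1 / 2 * Real.log ((t.re - s.re) ^ 2 + (t.im - s.im) ^ 2 + ε ^ 2)

/-- Green's identity on the disc for `f` and `regLog s ε`. It is `disc_divergence` for the field
`f ∇L - L ∇f` with `L = regLog s ε`, whose divergence off the real axis is `f ΔL - L g` with
`ΔL = 2 ε² / (|t - s|² + ε²)²`. The first and second components of the field appear against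
`cos θ` and `sin θ`, the coordinates of the outward normal. -/
theorem green_regLog {U : Set ℂ} (hU : IsOpen U) {c s : ℂ} {r R ε : ℝ} (hr : 0 < r) (hrR : r < R)
    (hε : ε ≠ 0) (hRU : Metric.closedBall c R ⊆ U) {f g : ℂ → ℝ}
    (hf1 : ContDiffOn ℝ 1 f U) (hf2 : ContDiffOn ℝ 2 f (U \ realAxis))
    (hg : ContinuousOn g U) (hlap : ∀ z ∈ U \ realAxis, lapl f z = g z) :
    ∫ t in Metric.ball c r, (f t * (2 * ε ^ 2 /
        ((t.re - s.re) ^ 2 + (t.im - s.im) ^ 2 + ε ^ 2) ^ 2) - regLog s ε t * g t) =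
      r * ((∫ θ in (-π)..π, Real.cos θ * (f (circleMap c r θ) * (((circleMap c r θ).re - s.re) /
          (((circleMap c r θ).re - s.re) ^ 2 + ((circleMap c r θ).im - s.im) ^ 2 + ε ^ 2)) -
          regLog s ε (circleMap c r θ) * fderiv ℝ f (circleMap c r θ) 1)) +
        ∫ θ in (-π)..π, Real.sin θ * (f (circleMap c r θ) * (((circleMap c r θ).im - s.im) /
          (((circleMap c r θ).re - s.re) ^ 2 + ((circleMap c r θ).im - s.im) ^ 2 + ε ^ 2)) -
          regLog s ε (circleMap c r θ) * fderiv ℝ f (circleMap c r θ) Complex.I)) := by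
  set M : ℂ → ℝ := fun t => (t.re - s.re) ^ 2 + (t.im - s.im) ^ 2 + ε ^ 2 with hM
  have M0 : ∀ t, M t ≠ 0 := fun t => by simp only [hM]; positivity
  have cM : Continuous M := by fun_prop
  have cL : Continuous (regLog s ε) := by
    unfold regLog
    exact continuous_const.mul (cM.log M0)
  have cf : ContinuousOn f U := hf1.continuousOn
  have cdf : ∀ v, ContinuousOn (fun t => fderiv ℝ f t v) U := fun v =>
    (hf1.continuousOn_fderiv_of_isOpen hU le_rfl).clm_apply continuousOn_const
  have cu : Continuous fun t : ℂ => (t.re - s.re) / M t := by fun_prop (disch := exact M0 _)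
  have cv : Continuous fun t : ℂ => (t.im - s.im) / M t := by fun_prop (disch := exact M0 _)
  have ck : Continuous fun t : ℂ => 2 * ε ^ 2 / M t ^ 2 := by
    have : ∀ t, M t ^ 2 ≠ 0 := fun t => pow_ne_zero _ (M0 t)
    fun_prop (disch := exact this _)
  have hax : IsOpen (U \ realAxis) :=
    hU.sdiff (isClosed_eq Complex.continuous_im continuous_const)
  have mem : ∀ z ∈ U, z.im ≠ 0 → z ∈ U \ realAxis := fun z hz h => ⟨hz, h⟩
  have df : ∀ z ∈ U, HasFDerivAt f (fderiv ℝ f z) z := fun z hz =>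
    ((hf1.differentiableOn one_ne_zero).differentiableAt (hU.mem_nhds hz)).hasFDerivAt
  have ddf : ∀ v, ∀ z ∈ U, z.im ≠ 0 → HasFDerivAt (fun w => fderiv ℝ f w v)
      (fderiv ℝ (fun w => fderiv ℝ f w v) z) z := fun v z hz h => by
    have h1 : ContDiffOn ℝ 1 (fderiv ℝ f) (U \ realAxis) :=
      hf2.fderiv_of_isOpen hax (by norm_num)
    have h2 := (h1.differentiableOn one_ne_zero).differentiableAt (hax.mem_nhds (mem z hz h))
    exact (h2.clm_apply (differentiableAt_const v)).hasFDerivAt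
  set N' : ℂ → ℂ →L[ℝ] ℝ := fun z =>
    (2 * (z.re - s.re)) • Complex.reCLM + (2 * (z.im - s.im)) • Complex.imCLM with hN'
  have dM : ∀ z, HasFDerivAt M (N' z) z := fun z => (hasFDerivAt_sq_dist s z).add_const _
  have dL : ∀ z, HasFDerivAt (regLog s ε) ((1 / 2 : ℝ) • (M z)⁻¹ • N' z) z := fun z => by
    unfold regLog
    exact ((dM z).log (M0 z)).const_mul (1 / 2)
  have dre : ∀ z, HasFDerivAt (fun t : ℂ => t.re - s.re) Complex.reCLM z := fun z =>
    Complex.reCLM.hasFDerivAt.sub_const _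
  have dim : ∀ z, HasFDerivAt (fun t : ℂ => t.im - s.im) Complex.imCLM z := fun z =>
    Complex.imCLM.hasFDerivAt.sub_const _
  have dinv : ∀ z, HasFDerivAt (fun t => (M t)⁻¹) ((-(M z ^ 2)⁻¹) • N' z) z := fun z =>
    (hasDerivAt_inv (M0 z)).comp_hasFDerivAt z (dM z)
  have dP : ∀ z ∈ U, z.im ≠ 0 → HasFDerivAt
      (fun t => f t * ((t.re - s.re) / M t) - regLog s ε t * fderiv ℝ f t 1) _ z :=
    fun z hz h => by
      simp only [div_eq_mul_inv]
      exact ((df z hz).mul ((dre z).mul (dinv z))).sub ((dL z).mul (ddf 1 z hz h))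
  have dQ : ∀ z ∈ U, z.im ≠ 0 → HasFDerivAt
      (fun t => f t * ((t.im - s.im) / M t) - regLog s ε t * fderiv ℝ f t Complex.I) _ z :=
    fun z hz h => by
      simp only [div_eq_mul_inv]
      exact ((df z hz).mul ((dim z).mul (dinv z))).sub ((dL z).mul (ddf Complex.I z hz h))
  refine disc_divergence hU hr hrR hRU
    (P := fun t => f t * ((t.re - s.re) / M t) - regLog s ε t * fderiv ℝ f t 1)
    (Q := fun t => f t * ((t.im - s.im) / M t) - regLog s ε t * fderiv ℝ f t Complex.I)
    (h := fun t => f t * (2 * ε ^ 2 / M t ^ 2) - regLog s ε t * g t)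
    ((cf.mul cu.continuousOn).sub (cL.continuousOn.mul (cdf 1)))
    ((cf.mul cv.continuousOn).sub (cL.continuousOn.mul (cdf Complex.I)))
    ((cf.mul ck.continuousOn).sub (cL.continuousOn.mul hg))
    (fun z hz h => (dP z hz h).differentiableAt) (fun z hz h => (dQ z hz h).differentiableAt)
    (fun z hz h => ?_)
  rw [(dP z hz h).fderiv, (dQ z hz h).fderiv, ← hlap z (mem z hz h)]
  have hMz : M z = (z.re - s.re) ^ 2 + (z.im - s.im) ^ 2 + ε ^ 2 := rfl
  have e2 : ε ^ 2 = M z - (z.re - s.re) ^ 2 - (z.im - s.im) ^ 2 := by rw [hMz]; ring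
  have := M0 z
  rw [e2]
  -- Once `M` is opaque, this is a rational identity in `M z` and the partial derivatives of `f`.
  clear_value M
  simp [hN', lapl]
  field_simp
  ring

/-- The profile `1 / (π (1 + |u|²)²)` has total mass one. Rescaled, it is `1 / (2 π)` times the
Laplacian of the regularised kernel. -/
theorem integral_peak : ∫ u : ℂ, (1 / π) * ((1 + ‖u‖ ^ 2) ^ 2)⁻¹ = 1 := by
  have h := integral_fun_norm_addHaar (volume : Measure ℂ)
    (fun y : ℝ => (1 / π) * ((1 + y ^ 2) ^ 2)⁻¹)
  rw [h, Complex.finrank_real_complex, measureReal_def, Complex.volume_ball]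
  have hi : ∫ y in Set.Ioi (0:ℝ), y ^ (2 - 1) • ((1 / π) * ((1 + y ^ 2) ^ 2)⁻¹) =
      0 - (-(1 / (2 * π)) * (1 + (0:ℝ) ^ 2)⁻¹) := by
    refine integral_Ioi_of_hasDerivAt_of_nonneg' (g := fun y => -(1 / (2 * π)) * (1 + y ^ 2)⁻¹)
      (fun x _ => ?_) (fun x hx => ?_) ?_
    · have h2 : HasDerivAt (fun y : ℝ => 1 + y ^ 2) (2 * x) x := by
        simpa using (hasDerivAt_pow 2 x).const_add 1
      have h3 := (h2.inv (by positivity)).const_mul (-(1 / (2 * π)))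
      convert! h3 using 1
      simp
      field_simp
    · have : 0 < x := hx
      simp only [smul_eq_mul]
      positivity
    · have : Tendsto (fun y : ℝ => (1 + y ^ 2)⁻¹) atTop (𝓝 0) :=
        (tendsto_atTop_add_const_left _ _ (tendsto_pow_atTop two_ne_zero)).inv_tendsto_atTop
      simpa using this.const_mul (-(1 / (2 * π)))
  rw [hi]
  simp

/-- The logarithmic kernel is integrable on discs. -/
theorem integrableOn_log (s c : ℂ) (r : ℝ) :
    IntegrableOn (fun t => Real.log ‖s - t‖) (Metric.ball c r) := by
  have h0 : ∀ ρ : ℝ, IntegrableOn (fun t : ℂ => Real.log ‖t‖) (Metric.ball 0 ρ) := fun ρ => by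
    rw [integrableOn_fun_norm_addHaar (volume : Measure ℂ) (f := Real.log),
      Complex.finrank_real_complex]
    have : Continuous fun y : ℝ => y ^ (2 - 1) • Real.log y := by
      simpa using Real.continuous_mul_log
    exact (this.continuousOn.integrableOn_compact isCompact_Icc).mono_set
      Set.Ioo_subset_Icc_self
  have h1 := (h0 (dist c s + r))
  have h2 := ((Measure.measurePreserving_sub_left (volume : Measure ℂ) s).integrableOn_comp_preimage
    (MeasurableEquiv.subLeft s).measurableEmbedding).2 h1
  refine h2.mono_set fun t ht => ?_
  have h3 : dist t c < r := ht
  have h4 := dist_triangle t c s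
  rw [Set.mem_preimage, mem_ball_zero_iff, ← dist_eq_norm, dist_comm]
  linarith

/-! ### Removing the regularisation -/

theorem sq_dist_eq_norm (s t : ℂ) : (t.re - s.re) ^ 2 + (t.im - s.im) ^ 2 = ‖s - t‖ ^ 2 := by
  rw [← Complex.normSq_eq_norm_sq, Complex.normSq_apply]
  simp; ring

theorem regLog_zero (s t : ℂ) : regLog s 0 t = Real.log ‖s - t‖ := by
  rw [regLog, sq_dist_eq_norm]
  simp

/-- An integrable bound for `regLog s ε`, uniform in small `ε`. -/
theorem abs_regLog_le {s t : ℂ} {ε : ℝ} (hst : t ≠ s) (hε : ε ^ 2 ≤ 1) :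
    |regLog s ε t| ≤ |Real.log ‖s - t‖| + ‖s - t‖ ^ 2 := by
  have h0 : 0 < ‖s - t‖ := norm_pos_iff.2 (sub_ne_zero.2 hst.symm)
  have h1 : Real.log ‖s - t‖ = 1 / 2 * Real.log (‖s - t‖ ^ 2) := by
    rw [Real.log_pow]; push_cast; ring
  have h2 : Real.log (‖s - t‖ ^ 2) ≤ Real.log (‖s - t‖ ^ 2 + ε ^ 2) :=
    Real.log_le_log (by positivity) (by nlinarith)
  have h3 : Real.log (‖s - t‖ ^ 2 + ε ^ 2) ≤ ‖s - t‖ ^ 2 :=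
    (Real.log_le_sub_one_of_pos (by positivity)).trans (by linarith)
  have h4 : 0 ≤ ‖s - t‖ ^ 2 := by positivity
  have h5 := neg_abs_le (Real.log ‖s - t‖)
  have h6 := abs_nonneg (Real.log ‖s - t‖)
  rw [regLog, sq_dist_eq_norm, abs_le]
  constructor <;> linarith

/-- The Laplacian `2 ε² / (|t - s|² + ε²)²` of the regularised kernel is `2 π` times an
approximate identity at `s` as `ε = k⁻¹` tends to `0`. -/
theorem tendsto_integral_peak {f : ℂ → ℝ} {c s : ℂ} {r : ℝ} (hs : s ∈ Metric.ball c r)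
    (hf : ContinuousOn f (Metric.closedBall c r)) :
    Tendsto (fun k : ℝ => ∫ t in Metric.ball c r, f t * (2 * (k⁻¹) ^ 2 /
        ((t.re - s.re) ^ 2 + (t.im - s.im) ^ 2 + (k⁻¹) ^ 2) ^ 2)) atTop (𝓝 (2 * π * f s)) := by
  have hi : Integrable ((Metric.ball c r).indicator f) :=
    ((hf.integrableOn_compact (isCompact_closedBall c r)).mono_set
      Metric.ball_subset_closedBall).integrable_indicator Metric.isOpen_ball.measurableSet
  have hev : (Metric.ball c r).indicator f =ᶠ[𝓝 s] f := by
    filter_upwards [Metric.isOpen_ball.mem_nhds hs] with t ht using Set.indicator_of_mem ht f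
  have hfs : ContinuousAt f s := hf.continuousAt (mem_of_superset
    (Metric.isOpen_ball.mem_nhds hs) Metric.ball_subset_closedBall)
  have h := tendsto_integral_comp_smul_smul_of_integrable' (μ := (volume : Measure ℂ))
    (φ := fun u : ℂ => (1 / π) * ((1 + ‖u‖ ^ 2) ^ 2)⁻¹) (fun u => by positivity)
    integral_peak ?_ hi (hfs.congr hev.symm)
  · rw [Set.indicator_of_mem hs] at h
    refine (h.const_mul (2 * π)).congr' ?_
    filter_upwards [eventually_gt_atTop 0] with k hk
    rw [← integral_const_mul, ← integral_indicator Metric.isOpen_ball.measurableSet]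
    congr 1
    ext t
    by_cases ht : t ∈ Metric.ball c r
    · rw [Set.indicator_of_mem ht, Set.indicator_of_mem ht, sq_dist_eq_norm,
        Complex.finrank_real_complex, norm_smul, Real.norm_of_nonneg hk.le, smul_eq_mul]
      have hp := Real.pi_pos
      field_simp
      ring
    · simp [Set.indicator_of_notMem ht]
  · rw [Complex.finrank_real_complex]
    have h1 : Tendsto (fun u : ℂ => (1 / π) * (1 + ‖u‖ ^ 2)⁻¹) (Bornology.cobounded ℂ) (𝓝 0) := by
      have : Tendsto (fun u : ℂ => (1 + ‖u‖ ^ 2)⁻¹) (Bornology.cobounded ℂ) (𝓝 0) :=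
        (tendsto_atTop_add_const_left _ _ ((tendsto_pow_atTop two_ne_zero).comp
          tendsto_norm_cobounded_atTop)).inv_tendsto_atTop
      simpa using this.const_mul (1 / π)
    refine squeeze_zero (fun u => by positivity) (fun u => ?_) h1
    have hp := Real.pi_pos
    rw [show ‖u‖ ^ 2 * (1 / π * ((1 + ‖u‖ ^ 2) ^ 2)⁻¹) =
      (‖u‖ ^ 2 / (1 + ‖u‖ ^ 2)) * (1 / π * (1 + ‖u‖ ^ 2)⁻¹) by field_simp]
    refine mul_le_of_le_one_left (by positivity) ?_
    rw [div_le_one (by positivity)]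
    linarith

/-- Dominated convergence for the volume term: `log |s - t|` may replace `regLog s ε` in the
limit. -/
theorem tendsto_integral_regLog {g : ℂ → ℝ} {c : ℂ} (s : ℂ) {r : ℝ}
    (hg : ContinuousOn g (Metric.closedBall c r)) :
    Tendsto (fun ε : ℝ => ∫ t in Metric.ball c r, regLog s ε t * g t) (𝓝 0)
      (𝓝 (∫ t in Metric.ball c r, g t * Real.log ‖s - t‖)) := by
  obtain ⟨C, hC⟩ := (isCompact_closedBall c r).exists_bound_of_continuousOn hg
  have hgm : AEStronglyMeasurable g (volume.restrict (Metric.ball c r)) :=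
    (hg.mono Metric.ball_subset_closedBall).aestronglyMeasurable
      Metric.isOpen_ball.measurableSet
  have hne : ∀ᵐ t ∂(volume.restrict (Metric.ball c r)), t ≠ s :=
    ae_restrict_of_ae (Measure.ae_ne volume s)
  have hmem := ae_restrict_mem (μ := volume) (Metric.isOpen_ball (x := c) (ε := r)).measurableSet
  refine tendsto_integral_filter_of_dominated_convergence
    (fun t => (|Real.log ‖s - t‖| + ‖s - t‖ ^ 2) * C) ?_ ?_ ?_ ?_
  · refine Eventually.of_forall fun ε => AEStronglyMeasurable.mul ?_ hgm
    unfold regLog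
    exact Measurable.aestronglyMeasurable (by fun_prop)
  · have h1 : ∀ᶠ ε : ℝ in 𝓝 0, ε ^ 2 < 1 := by
      have : ContinuousAt (fun ε : ℝ => ε ^ 2) 0 := by fun_prop
      exact this.eventually_lt_const (by simp)
    filter_upwards [h1] with ε hε
    filter_upwards [hne, hmem] with t ht hb
    rw [norm_mul, Real.norm_eq_abs]
    exact mul_le_mul (abs_regLog_le ht hε.le) (hC t (Metric.ball_subset_closedBall hb))
      (norm_nonneg _) (by positivity)
  · refine Integrable.mul_const (Integrable.add (integrableOn_log s c r).abs ?_) C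
    have : Continuous fun t : ℂ => ‖s - t‖ ^ 2 := by fun_prop
    exact (this.continuousOn.integrableOn_compact (isCompact_closedBall c r)).mono_set
      Metric.ball_subset_closedBall
  · filter_upwards [hne] with t ht
    rw [mul_comm (g t), ← regLog_zero]
    refine Tendsto.mul_const _ ?_
    have h0 : 0 < ‖s - t‖ := norm_pos_iff.2 (sub_ne_zero.2 ht.symm)
    have : ContinuousAt (fun ε => regLog s ε t) 0 := by
      unfold regLog
      rw [sq_dist_eq_norm]
      exact continuousAt_const.mul (ContinuousAt.log (by fun_prop) (by positivity))
    exact this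

theorem hasFDerivAt_log_norm {s z : ℂ} (hz : z ≠ s) :
    HasFDerivAt (fun t => Real.log ‖s - t‖)
      (((z.re - s.re) / ‖s - z‖ ^ 2) • Complex.reCLM +
        ((z.im - s.im) / ‖s - z‖ ^ 2) • Complex.imCLM) z := by
  have h0 : 0 < ‖s - z‖ := norm_pos_iff.2 (sub_ne_zero.2 hz.symm)
  have h1 : (fun t => Real.log ‖s - t‖) =
      fun t : ℂ => 1 / 2 * Real.log ((t.re - s.re) ^ 2 + (t.im - s.im) ^ 2) := by
    ext t
    rw [← regLog_zero, regLog]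
    simp
  rw [h1]
  have h2 := ((hasFDerivAt_sq_dist s z).log
    (by rw [sq_dist_eq_norm]; positivity)).const_mul (1 / 2)
  convert! h2 using 1
  rw [sq_dist_eq_norm]
  ext
  simp
  field_simp

/-! ### Green's representation formula -/

/-- Green's representation formula on a disc for a function that is `C¹`
near the closed disc, `C²` off the real axis, with `Δf = g` off the real axis. The
boundary circle is parametrized by `circleMap c r`, arc length being `r dθ`. -/
theorem green_representation_across_real_axis
    (c : ℂ) (r : ℝ) (hr : 0 < r) (U : Set ℂ) (hU : IsOpen U)
    (hUD : closure (Metric.ball c r) ⊆ U)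
    (f g : ℂ → ℝ)
    (hf1 : ContDiffOn ℝ 1 f U)
    (hf2 : ContDiffOn ℝ 2 f (U \ realAxis))
    (hg : ContinuousOn g U)
    (hlap : ∀ z ∈ U \ realAxis, lapl f z = g z) :
    ∀ s ∈ Metric.ball c r,
      2 * π * f s =
        (∫ t in Metric.ball c r, g t * Real.log ‖s - t‖) +
        ∫ θ in (0:ℝ)..(2 * π),
          (f (circleMap c r θ) *
              (fderiv ℝ (fun t' => Real.log ‖s - t'‖) (circleMap c r θ)
                ((circleMap c r θ - c) / r)) -
            (fderiv ℝ f (circleMap c r θ) ((circleMap c r θ - c) / r)) *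
              Real.log ‖s - circleMap c r θ‖) * r := by
  intro s hs
  rw [closure_ball c hr.ne'] at hUD
  -- A slightly larger disc still lies in `U`; the radial cutoffs live there.
  obtain ⟨R, hrR, hRU⟩ : ∃ R, r < R ∧ Metric.closedBall c R ⊆ U := by
    obtain ⟨δ, hδ, h⟩ := (isCompact_closedBall c r).exists_cthickening_subset_open hU hUD
    refine ⟨r + δ, by linarith, ?_⟩
    rwa [cthickening_closedBall hδ.le hr.le, add_comm] at h
  have hcU : ∀ θ, circleMap c r θ ∈ U := fun θ =>
    hUD (circleMap_mem_closedBall c hr.le θ)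
  have hcs : ∀ θ, circleMap c r θ ≠ s := fun θ h => by
    have h1 : dist s c < r := hs
    rw [← h, dist_circleMap, abs_of_pos hr] at h1
    exact lt_irrefl _ h1
  -- Since `s` is off the circle, the boundary terms are continuous in `ε` down to `ε = 0`.
  have hcpos : ∀ θ ε : ℝ, ((circleMap c r θ).re - s.re) ^ 2 +
      ((circleMap c r θ).im - s.im) ^ 2 + ε ^ 2 ≠ 0 := fun θ ε => by
    have := norm_pos_iff.2 (sub_ne_zero.2 (hcs θ).symm)
    rw [sq_dist_eq_norm]
    positivity
  have ccm : Continuous (circleMap c r) := continuous_circleMap c r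
  have cf : Continuous fun θ => f (circleMap c r θ) :=
    hf1.continuousOn.comp_continuous ccm hcU
  have cdf : ∀ v, Continuous fun θ => fderiv ℝ f (circleMap c r θ) v := fun v =>
    ((hf1.continuousOn_fderiv_of_isOpen hU le_rfl).clm_apply
      continuousOn_const).comp_continuous ccm hcU
  have cM : Continuous fun p : ℝ × ℝ => ((circleMap c r p.2).re - s.re) ^ 2 +
      ((circleMap c r p.2).im - s.im) ^ 2 + p.1 ^ 2 := by fun_prop
  have cL : Continuous fun p : ℝ × ℝ => regLog s p.1 (circleMap c r p.2) := by
    unfold regLog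
    exact continuous_const.mul (cM.log fun p => hcpos p.2 p.1)
  have cP : Continuous fun ε => ∫ θ in (-π)..π, Real.cos θ * (f (circleMap c r θ) *
      (((circleMap c r θ).re - s.re) / (((circleMap c r θ).re - s.re) ^ 2 +
        ((circleMap c r θ).im - s.im) ^ 2 + ε ^ 2)) -
          regLog s ε (circleMap c r θ) * fderiv ℝ f (circleMap c r θ) 1) := by
    apply intervalIntegral.continuous_parametric_intervalIntegral_of_continuous'
    have h1 : Continuous fun p : ℝ × ℝ => (circleMap c r p.2).re - s.re := by fun_prop
    exact (Real.continuous_cos.comp continuous_snd).mul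
      (((cf.comp continuous_snd).mul (h1.div cM fun p => hcpos p.2 p.1)).sub
        (cL.mul ((cdf 1).comp continuous_snd)))
  have cQ : Continuous fun ε => ∫ θ in (-π)..π, Real.sin θ * (f (circleMap c r θ) *
      (((circleMap c r θ).im - s.im) / (((circleMap c r θ).re - s.re) ^ 2 +
        ((circleMap c r θ).im - s.im) ^ 2 + ε ^ 2)) -
          regLog s ε (circleMap c r θ) * fderiv ℝ f (circleMap c r θ) Complex.I) := by
    apply intervalIntegral.continuous_parametric_intervalIntegral_of_continuous'
    have h1 : Continuous fun p : ℝ × ℝ => (circleMap c r p.2).im - s.im := by fun_prop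
    exact (Real.continuous_sin.comp continuous_snd).mul
      (((cf.comp continuous_snd).mul (h1.div cM fun p => hcpos p.2 p.1)).sub
        (cL.mul ((cdf Complex.I).comp continuous_snd)))
  have inv0 : Tendsto (fun k : ℝ => k⁻¹) atTop (𝓝 0) := tendsto_inv_atTop_zero
  have lhs := (tendsto_integral_peak hs (hf1.continuousOn.mono hUD)).sub
    ((tendsto_integral_regLog s (hg.mono hUD)).comp inv0)
  have rhs := ((continuous_const (y := r)).mul (cP.add cQ)).continuousAt.tendsto.comp inv0
  simp only [Function.comp_def, Pi.mul_apply, Pi.add_apply] at rhs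
  -- Both sides of `green_regLog` with `ε = k⁻¹` converge as `k → ∞`.
  have heq := tendsto_nhds_unique (lhs.congr' ?_) rhs
  · rw [← sub_eq_iff_eq_add', heq, ← intervalIntegral.integral_add,
      ← intervalIntegral.integral_const_mul]
    · set G : ℝ → ℝ := fun θ => (f (circleMap c r θ) *
              (fderiv ℝ (fun t' => Real.log ‖s - t'‖) (circleMap c r θ)
                ((circleMap c r θ - c) / r)) -
            (fderiv ℝ f (circleMap c r θ) ((circleMap c r θ - c) / r)) *
              Real.log ‖s - circleMap c r θ‖) * r with hG
      -- The polar chart uses the angles `(-π, π)`, the statement `(0, 2π)`.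
      have hper : Function.Periodic G (2 * π) := fun θ => by
        simp only [hG, periodic_circleMap c r θ]
      have h1 := hper.intervalIntegral_add_eq (-π) 0
      rw [zero_add, show -π + 2 * π = π by ring] at h1
      rw [← h1]
      refine intervalIntegral.integral_congr fun θ _ => ?_
      have hn : (circleMap c r θ - c) / r =
          (Real.cos θ) • (1 : ℂ) + (Real.sin θ) • Complex.I := by
        have : (r : ℂ) ≠ 0 := by exact_mod_cast hr.ne'
        simp [circleMap, Complex.exp_mul_I]
        field_simp
      simp only [hG, (hasFDerivAt_log_norm (hcs θ)).fderiv, hn, map_add, map_smul,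
        regLog_zero, sq_dist_eq_norm]
      simp
      ring
    · have h1 : Continuous fun θ => (circleMap c r θ).re - s.re := by fun_prop
      have h2 := cM.comp (Continuous.prodMk_right (0:ℝ))
      have h3 := cL.comp (Continuous.prodMk_right (0:ℝ))
      exact (Real.continuous_cos.mul ((cf.mul (h1.div h2 fun θ => hcpos θ 0)).sub
        (h3.mul (cdf 1)))).intervalIntegrable _ _
    · have h1 : Continuous fun θ => (circleMap c r θ).im - s.im := by fun_prop
      have h2 := cM.comp (Continuous.prodMk_right (0:ℝ))
      have h3 := cL.comp (Continuous.prodMk_right (0:ℝ))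
      exact (Real.continuous_sin.mul ((cf.mul (h1.div h2 fun θ => hcpos θ 0)).sub
        (h3.mul (cdf Complex.I)))).intervalIntegrable _ _
  · filter_upwards [eventually_gt_atTop 0] with k hk
    have hk' : k⁻¹ ≠ 0 := inv_ne_zero hk.ne'
    have := green_regLog hU (s := s) hr hrR hk' hRU hf1 hf2 hg hlap
    simp only [Function.comp_apply]
    rw [← this, integral_sub]
    · have hM : ∀ t : ℂ, ((t.re - s.re) ^ 2 + (t.im - s.im) ^ 2 + k⁻¹ ^ 2) ^ 2 ≠ 0 := fun t => by
        positivity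
      have hc : Continuous fun t : ℂ => 2 * k⁻¹ ^ 2 /
          ((t.re - s.re) ^ 2 + (t.im - s.im) ^ 2 + k⁻¹ ^ 2) ^ 2 :=
        continuous_const.div (by fun_prop) hM
      exact (((hf1.continuousOn.mono hUD).mul hc.continuousOn).integrableOn_compact
        (isCompact_closedBall c r)).mono_set Metric.ball_subset_closedBall
    · have hc : Continuous (regLog s k⁻¹) := by
        unfold regLog
        exact continuous_const.mul (Continuous.log (by fun_prop) fun t => by positivity)
      exact ((hc.continuousOn.mul (hg.mono hUD)).integrableOn_compact
        (isCompact_closedBall c r)).mono_set Metric.ball_subset_closedBall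
end
end

section
/- Let k > 0 be a noninteger real number, let D ⊂ ℂ be an open disc and D' an open set with compact closure contained in D. There is a constant c = c(k, D', D) with the following property: whenever U is an open neighborhood of the closure of D, f : U → ℝ is continuously differentiable on U and twice continuously differentiable on U ∖ ℝ, g ∈ C^k(U,ℝ), and Δf = g on U ∖ ℝ, then the restriction of f to D' belongs to C^{k+2}(D',ℝ) and |f|_{C^{k+2}(D')} ≤ c ( |f|_{C^1(D)} + |g|_{C^k(D)} ). -/
/-!
The equation first passes to its weak form across the real axis. Applying the divergence theorem in
the upper and in the lower half-plane to the field `f ∇ψ - ψ ∇f`, for a test function `ψ`, produces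
two boundary integrals over the axis; as `f` is `C¹` there, they cancel, and
`∫ f Δψ = ∫ g ψ` (`weakLap_of_classical`). From here on the axis plays no role.

The interior estimate for the weak equation is proved without the Newtonian potential, by a dyadic
decomposition. There are a mollifier `φ` and a smooth `Ψ`, both supported in the unit disc, with
`ΔΨ = 4 φ(2 ·) - φ` (`exists_kernels`). Testing the weak equation against `Ψ((z - ·) / s)` shows that
halving the scale `s` changes the mollification of `f` at `z` by the convolution of `g` with
`Ψ(· / s)` (`moll_step`). Hence `f` equals its mollification at a fixed scale `δ` plus the sum over
`s = δ / 2 ^ j` of these convolutions. A derivative of `Ψ` has mean zero, so only the oscillation of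
`g` on discs of radius `s` enters: derivatives of order at most two of the piece at scale `s` are
`O(s ^ α)` and those of order three are `O(s ^ (α - 1))` (`abs_dM_le_holder`). Summing over dyadic
scales, with those above `dist x y` treated by the third derivatives and those below by size
(`holder_tsum`), gives the `C^{2+α}` estimate `schauder_base`.

Higher orders follow by induction (`schauder_weak`): the first partial derivatives of `f` solve
weakly the equation whose right-hand side is the corresponding derivative of `g`.
-/

open Filter Topology

noncomputable section

/-- The two coordinate directions `σ`, `t` in `ℂ = ℝ²`. -/
def cdir : Fin 2 → ℂ := ![1, Complex.I]

/-- `f` has partial derivative `L` at `s` in the direction `v ∈ ℂ`, as a limit of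
difference quotients. -/
def HasPartialAtC (f : ℂ → ℝ) (v : ℂ) (s : ℂ) (L : ℝ) : Prop :=
  Filter.Tendsto (fun h : ℝ => h⁻¹ • (f (s + h • v) - f s)) (𝓝[≠] (0:ℝ)) (𝓝 L)

/-- `D` is a family of iterated partial derivatives of `D []` on `Ω`, up to order `⌊k⌋`. -/
def IsPartialFamilyC (Ω : Set ℂ) (k : ℝ) (D : List (Fin 2) → ℂ → ℝ) : Prop :=
  ∀ l : List (Fin 2), l.length < ⌊k⌋₊ → ∀ i : Fin 2, ∀ s ∈ Ω,
    HasPartialAtC (D l) (cdir i) s (D (i :: l) s)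

/-- `g ∈ C^k(Ω, ℝ)` with `C^k` Hölder norm at most `B`. -/
def CkNormLeC (Ω : Set ℂ) (k : ℝ) (g : ℂ → ℝ) (B : ℝ) : Prop :=
  ∃ D : List (Fin 2) → ℂ → ℝ, D [] = g ∧ IsPartialFamilyC Ω k D ∧
    ∀ l : List (Fin 2), l.length ≤ ⌊k⌋₊ →
      (∀ s ∈ Ω, |D l s| ≤ B) ∧
      (∀ s ∈ Ω, ∀ t ∈ Ω, |D l s - D l t| ≤ B * dist s t ^ (k - ⌊k⌋₊))

/-- `g ∈ C^k(Ω, ℝ)`: finite `C^k` Hölder norm. -/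
def MemCkC (Ω : Set ℂ) (k : ℝ) (g : ℂ → ℝ) : Prop :=
  ∃ B : ℝ, CkNormLeC Ω k g B

section

open MeasureTheory
open scoped ContDiff

/-! ### Test functions and their partial derivatives -/

/-- The partial derivative of `Θ` in the coordinate direction `cdir i` (total derivative applied
to the direction; meaningful where `Θ` is differentiable). -/
def pd (i : Fin 2) (Θ : ℂ → ℝ) : ℂ → ℝ := fun z => fderiv ℝ Θ z (cdir i)

/-- Iterated partial derivatives; the head of the list is the derivative taken last, as in
`IsPartialFamilyC`. -/
def pdL : List (Fin 2) → (ℂ → ℝ) → ℂ → ℝ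
  | [], Θ => Θ
  | i :: l, Θ => pd i (pdL l Θ)

/-- The Laplacian of a smooth function, in terms of `pd`. -/
def Lap (Θ : ℂ → ℝ) : ℂ → ℝ := fun z => pd 0 (pd 0 Θ) z + pd 1 (pd 1 Θ) z

lemma cdir_zero : cdir 0 = 1 := rfl
lemma cdir_one : cdir 1 = Complex.I := rfl

lemma norm_cdir (i : Fin 2) : ‖cdir i‖ = 1 := by
  fin_cases i <;> simp [cdir]

lemma contDiff_pd {Θ : ℂ → ℝ} (h : ContDiff ℝ ∞ Θ) (i : Fin 2) : ContDiff ℝ ∞ (pd i Θ) := by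
  unfold pd
  exact (h.fderiv_right (m := ∞) (by simp)).clm_apply contDiff_const

lemma tsupport_pd (Θ : ℂ → ℝ) (i : Fin 2) : tsupport (pd i Θ) ⊆ tsupport Θ := by
  refine subset_trans (closure_mono ?_) (tsupport_fderiv_subset ℝ)
  intro z hz
  rw [Function.mem_support] at hz ⊢
  contrapose! hz
  simp [pd, hz]

lemma pd_comm {Θ : ℂ → ℝ} (h : ContDiff ℝ ∞ Θ) (i j : Fin 2) : pd i (pd j Θ) = pd j (pd i Θ) := by
  funext z
  have hd : DifferentiableAt ℝ (fderiv ℝ Θ) z :=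
    ((h.fderiv_right (m := ∞) (by simp)).differentiable (by simp)) z
  have key : ∀ i j : Fin 2, pd i (pd j Θ) z = fderiv ℝ (fderiv ℝ Θ) z (cdir i) (cdir j) := by
    intro i j
    unfold pd
    rw [fderiv_clm_apply hd (differentiableAt_const _)]
    simp
  rw [key, key]
  exact (h.contDiffAt.isSymmSndFDerivAt (by simpa using (WithTop.coe_le_coe.2 le_top : ((2 : ℕ∞) : WithTop ℕ∞) ≤ ∞))) _ _

lemma Lap_pd {Θ : ℂ → ℝ} (h : ContDiff ℝ ∞ Θ) (i : Fin 2) : Lap (pd i Θ) = pd i (Lap Θ) := by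
  funext z
  have e : ∀ j, pd j (pd j (pd i Θ)) = pd i (pd j (pd j Θ)) := by
    intro j
    rw [pd_comm h j i, pd_comm (contDiff_pd h j) j i]
  have d : ∀ j, DifferentiableAt ℝ (pd j (pd j Θ)) z := fun j =>
    ((contDiff_pd (contDiff_pd h j) j).differentiable (by simp)) z
  have hsum : pd i (Lap Θ) z = pd i (pd 0 (pd 0 Θ)) z + pd i (pd 1 (pd 1 Θ)) z := by
    change fderiv ℝ (fun w => pd 0 (pd 0 Θ) w + pd 1 (pd 1 Θ) w) z (cdir i) = _
    rw [fderiv_fun_add (d 0) (d 1)]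
    rfl
  rw [hsum]
  simp only [Lap, e]

/-- A smooth kernel supported in the closed unit disc. -/
structure IsKer (Θ : ℂ → ℝ) : Prop where
  smooth : ContDiff ℝ ∞ Θ
  supp : tsupport Θ ⊆ Metric.closedBall 0 1

namespace IsKer
variable {Θ : ℂ → ℝ}

lemma pd (h : IsKer Θ) (i : Fin 2) : IsKer (pd i Θ) :=
  ⟨contDiff_pd h.smooth i, (tsupport_pd Θ i).trans h.supp⟩

lemma pdL (h : IsKer Θ) : ∀ l : List (Fin 2), IsKer (pdL l Θ)
  | [] => h
  | i :: l => (h.pdL l).pd i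

lemma compact (h : IsKer Θ) : HasCompactSupport Θ :=
  HasCompactSupport.of_support_subset_isCompact (isCompact_closedBall 0 1)
    (subset_closure.trans h.supp)

lemma eq_zero (h : IsKer Θ) {z : ℂ} (hz : 1 < ‖z‖) : Θ z = 0 := by
  by_contra hne
  have := h.supp (subset_closure (Function.mem_support.2 hne))
  rw [mem_closedBall_zero_iff] at this
  linarith

lemma cont (h : IsKer Θ) : Continuous Θ := h.smooth.continuous

lemma integrable (h : IsKer Θ) : Integrable Θ := h.cont.integrable_of_hasCompactSupport h.compact

lemma bound (h : IsKer Θ) : ∃ C, ∀ z, |Θ z| ≤ C := by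
  obtain ⟨C, hC⟩ := h.cont.bounded_above_of_compact_support h.compact
  exact ⟨C, fun z => by simpa using hC z⟩

end IsKer

lemma hasLineDerivAt_pd {Θ : ℂ → ℝ} (h : ContDiff ℝ ∞ Θ) (i : Fin 2) (z : ℂ) :
    HasLineDerivAt ℝ Θ (pd i Θ z) z (cdir i) :=
  ((h.differentiable (by simp)) z).hasFDerivAt.hasLineDerivAt _

lemma hasPartialAtC_iff {f : ℂ → ℝ} {i : Fin 2} {s : ℂ} {L : ℝ} :
    HasPartialAtC f (cdir i) s L ↔ HasLineDerivAt ℝ f L s (cdir i) :=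
  hasLineDerivAt_iff_tendsto_slope_zero.symm

/-- A function continuous on an open set `Ω`, multiplied by a continuous function compactly
supported in `Ω`, is continuous on the whole plane. -/
lemma continuous_mul_of_tsupport {Ω : Set ℂ} (hΩ : IsOpen Ω) {G χ : ℂ → ℝ}
    (hG : ContinuousOn G Ω) (hχ : Continuous χ) (hs : tsupport χ ⊆ Ω) :
    Continuous (fun z => G z * χ z) := by
  rw [continuous_iff_continuousAt]
  intro z
  by_cases hz : z ∈ Ω
  · exact (hG.continuousAt (hΩ.mem_nhds hz)).mul hχ.continuousAt
  · have h0 : χ =ᶠ[𝓝 z] 0 := notMem_tsupport_iff_eventuallyEq.1 fun h => hz (hs h)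
    have : (fun z => G z * χ z) =ᶠ[𝓝 z] fun _ => 0 := by
      filter_upwards [h0] with w hw
      simp [hw]
    exact this.continuousAt

lemma integrable_mul_of_tsupport {Ω : Set ℂ} (hΩ : IsOpen Ω) {G χ : ℂ → ℝ}
    (hG : ContinuousOn G Ω) (hχ : Continuous χ) (hc : HasCompactSupport χ) (hs : tsupport χ ⊆ Ω) :
    Integrable (fun z => G z * χ z) :=
  (continuous_mul_of_tsupport hΩ hG hχ hs).integrable_of_hasCompactSupport hc.mul_left

/-- Integration by parts against a test function, for a function having one continuous partial
derivative. -/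
lemma integral_mul_pd {Ω : Set ℂ} (hΩ : IsOpen Ω) {G G' χ : ℂ → ℝ} {i : Fin 2}
    (hG : ContinuousOn G Ω) (hG' : ContinuousOn G' Ω)
    (hd : ∀ z ∈ Ω, HasLineDerivAt ℝ G (G' z) z (cdir i))
    (hχ : ContDiff ℝ ∞ χ) (hc : HasCompactSupport χ) (hs : tsupport χ ⊆ Ω) :
    ∫ z, G z * pd i χ z = - ∫ z, G' z * χ z := by
  have hc' : HasCompactSupport (pd i χ) :=
    HasCompactSupport.of_support_subset_isCompact hc
      (subset_closure.trans (tsupport_pd χ i))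
  have i2 := integrable_mul_of_tsupport hΩ hG (contDiff_pd hχ i).continuous hc'
    ((tsupport_pd χ i).trans hs)
  exact integral_bilinear_hasLineDerivAt_right_eq_neg_left_of_integrable
    (B := ContinuousLinearMap.mul ℝ ℝ) (μ := volume) (f := G) (f' := G') (g := χ) (g' := pd i χ)
    (v := cdir i)
    (by simpa using integrable_mul_of_tsupport hΩ hG' hχ.continuous hc hs)
    (by simpa using i2)
    (by simpa using integrable_mul_of_tsupport hΩ hG hχ.continuous hc hs)
    (fun z hz => hd z (hs hz)) (fun z _ => hasLineDerivAt_pd hχ i z)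

lemma IsKer.integral_pd {Θ : ℂ → ℝ} (h : IsKer Θ) (i : Fin 2) : ∫ z, _root_.pd i Θ z = 0 := by
  have := integral_mul_pd (Ω := Set.univ) isOpen_univ (G := fun _ => 1) (G' := fun _ => 0) (i := i)
    continuousOn_const continuousOn_const
    (fun z _ => by
      simpa using ((hasFDerivAt_const (1 : ℝ) z).hasLineDerivAt (cdir i))) h.smooth h.compact
    (Set.subset_univ _)
  simpa using this

/-! ### Scaled convolutions -/

/-- Convolution of `G` with the rescaled kernel `Θ(·/s)`, without normalising factor. -/
def M (s : ℝ) (Θ G : ℂ → ℝ) (z : ℂ) : ℝ := ∫ ζ, Θ (s⁻¹ • (z - ζ)) * G ζ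

lemma integral_scale {s : ℝ} (hs : 0 < s) (F : ℂ → ℝ) (z : ℂ) :
    ∫ ζ, F (s⁻¹ • (z - ζ)) = s ^ 2 * ∫ ζ, F ζ := by
  rw [integral_sub_left_eq_self (fun w => F (s⁻¹ • w)) volume z,
    Measure.integral_comp_inv_smul volume F s, Complex.finrank_real_complex, smul_eq_mul,
    abs_of_pos (by positivity)]

lemma IsKer.integrable_scale {Θ : ℂ → ℝ} (h : IsKer Θ) {s : ℝ} (hs : 0 < s) (z : ℂ) :
    Integrable (fun ζ => Θ (s⁻¹ • (z - ζ))) :=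
  (h.integrable.comp_smul (inv_ne_zero hs.ne')).comp_sub_left z

lemma IsKer.integrable_M {Θ : ℂ → ℝ} (h : IsKer Θ) (s : ℝ) {G : ℂ → ℝ}
    (hG : Integrable G) (z : ℂ) : Integrable (fun ζ => Θ (s⁻¹ • (z - ζ)) * G ζ) := by
  obtain ⟨C, hC⟩ := h.bound
  have hc : Continuous fun ζ => Θ (s⁻¹ • (z - ζ)) := h.cont.comp (by fun_prop)
  exact hG.bdd_mul hc.aestronglyMeasurable (c := C) (Filter.Eventually.of_forall fun ζ => hC _)

/-- Weighted bound: only the values of `G` on the disc of radius `s` around `z` matter. -/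
lemma abs_M_le {Θ : ℂ → ℝ} (h : IsKer Θ) {s B : ℝ} (hs : 0 < s) {G : ℂ → ℝ}
    {z : ℂ} (hB : ∀ ζ, dist ζ z ≤ s → |G ζ| ≤ B) :
    |M s Θ G z| ≤ (∫ ζ, |Θ ζ|) * s ^ 2 * B := by
  have h1 : |M s Θ G z| ≤ ∫ ζ, |Θ (s⁻¹ • (z - ζ))| * B := by
    have hi : Integrable (fun ζ => |Θ (s⁻¹ • (z - ζ))| * B) :=
      ((h.integrable_scale hs z).abs).mul_const B
    refine norm_integral_le_of_norm_le (f := fun ζ => Θ (s⁻¹ • (z - ζ)) * G ζ) hi (Filter.Eventually.of_forall fun ζ => ?_)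
    rw [Real.norm_eq_abs, abs_mul]
    by_cases hz : dist ζ z ≤ s
    · exact mul_le_mul_of_nonneg_left (hB ζ hz) (abs_nonneg _)
    · rw [h.eq_zero]
      · simp
      · rw [norm_smul, norm_inv, Real.norm_eq_abs, abs_of_pos hs, ← div_eq_inv_mul, lt_div_iff₀ hs,
          one_mul, ← dist_eq_norm, dist_comm]
        exact not_le.1 hz
  rw [integral_mul_const, integral_scale hs (fun ζ => |Θ ζ|) z] at h1
  linarith

lemma M_sub_const {Θ : ℂ → ℝ} (h : IsKer Θ) {s : ℝ} (hs : 0 < s) {G : ℂ → ℝ}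
    (hG : Integrable G) (z : ℂ) (a : ℝ) :
    M s Θ (fun ζ => G ζ - a) z = M s Θ G z - s ^ 2 * (∫ ζ, Θ ζ) * a := by
  unfold M
  simp_rw [mul_sub]
  rw [integral_sub (h.integrable_M s hG z) ((h.integrable_scale hs z).mul_const a),
    integral_mul_const, integral_scale hs]

/-- A kernel of mean zero sees only the oscillation of `G`. -/
lemma abs_M_le_osc {Θ : ℂ → ℝ} (h : IsKer Θ) (h0 : ∫ ζ, Θ ζ = 0) {s B : ℝ} (hs : 0 < s)
    {G : ℂ → ℝ} (hG : Integrable G)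
    {z : ℂ} (hB : ∀ ζ, dist ζ z ≤ s → |G ζ - G z| ≤ B) :
    |M s Θ G z| ≤ (∫ ζ, |Θ ζ|) * s ^ 2 * B := by
  have := abs_M_le h hs (G := fun ζ => G ζ - G z) hB
  rw [M_sub_const h hs hG, h0] at this
  simpa using this

lemma hasLineDerivAt_M {Θ : ℂ → ℝ} (h : IsKer Θ) (s : ℝ) {G : ℂ → ℝ}
    (hG : Integrable G) (z : ℂ) (i : Fin 2) :
    HasLineDerivAt ℝ (M s Θ G) (s⁻¹ * M s (pd i Θ) G z) z (cdir i) := by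
  obtain ⟨C, hC⟩ := (h.pd i).bound
  have key := hasDerivAt_integral_of_dominated_loc_of_deriv_le (μ := (volume : Measure ℂ))
    (x₀ := (0 : ℝ)) (s := Set.univ)
    (F := fun t ζ => Θ (s⁻¹ • (z + t • cdir i - ζ)) * G ζ)
    (F' := fun t ζ => s⁻¹ * pd i Θ (s⁻¹ • (z + t • cdir i - ζ)) * G ζ)
    (bound := fun ζ => |s⁻¹| * C * |G ζ|) Filter.univ_mem
    (Filter.Eventually.of_forall fun t => (h.integrable_M s hG _).aestronglyMeasurable)
    (h.integrable_M s hG _)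
    (by
      have hm := (((h.pd i).integrable_M s hG (z + (0:ℝ) • cdir i)).const_mul s⁻¹)
      simpa only [mul_assoc] using hm.aestronglyMeasurable)
    (by
      refine Filter.Eventually.of_forall fun ζ t _ => ?_
      rw [Real.norm_eq_abs, abs_mul, abs_mul]
      gcongr
      exact hC _)
    (hG.abs.const_mul _)
    (by
      refine Filter.Eventually.of_forall fun ζ t _ => ?_
      have hd : HasDerivAt (fun t : ℝ => s⁻¹ • (z + t • cdir i - ζ)) (s⁻¹ • cdir i) t := by
        have := ((((hasDerivAt_id t).smul_const (cdir i)).const_add z).sub_const ζ).const_smul s⁻¹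
        rw [one_smul] at this
        exact this
      have hΘ := ((h.smooth.differentiable (by simp))
        (s⁻¹ • (z + t • cdir i - ζ))).hasFDerivAt.comp_hasDerivAt t hd
      rw [map_smul, smul_eq_mul] at hΘ
      exact hΘ.mul_const (G ζ))
  have h2 := key.2
  simp only [zero_smul, add_zero, mul_assoc] at h2
  rw [integral_const_mul] at h2
  exact h2

/-! ### A mollifier whose dyadic difference is a Laplacian -/

lemma pd_eq_of_hasDerivAt {F : ℂ → ℝ} {z : ℂ} {i : Fin 2} {L : ℝ} (hF : DifferentiableAt ℝ F z)
    (h : HasDerivAt (fun t : ℝ => F (z + t • cdir i)) L 0) : pd i F z = L :=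
  HasDerivAt.unique (hF.hasFDerivAt.hasLineDerivAt (cdir i)) h

lemma contDiff_normSq : ContDiff ℝ ∞ (fun z : ℂ => Complex.normSq z) := by
  have : (fun z : ℂ => Complex.normSq z) = fun z => Complex.reCLM z * Complex.reCLM z
      + Complex.imCLM z * Complex.imCLM z := by
    funext z; simp [Complex.normSq_apply]
  rw [this]
  fun_prop

lemma normSq_line_zero (z : ℂ) (t : ℝ) :
    Complex.normSq (z + t • cdir 0) = (z.re + t) * (z.re + t) + z.im * z.im := by
  simp [Complex.normSq_apply, cdir]

lemma normSq_line_one (z : ℂ) (t : ℝ) :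
    Complex.normSq (z + t • cdir 1) = z.re * z.re + (z.im + t) * (z.im + t) := by
  simp [Complex.normSq_apply, cdir]

lemma hasDerivAt_sq_line (a b : ℝ) :
    HasDerivAt (fun t : ℝ => (a + t) * (a + t) + b) (2 * a) 0 := by
  have h1 : HasDerivAt (fun t : ℝ => a + t) 1 0 := (hasDerivAt_id (0:ℝ)).const_add a
  refine ((h1.mul h1).add_const b).congr_deriv ?_
  simp; ring

/-- The Laplacian of a radial function `Q(|z|²)` with `Q' = q` is `4 q + 4 |z|² q'`. -/
lemma Lap_radial {Q q : ℝ → ℝ} (hQ : ContDiff ℝ ∞ Q) (hq : ContDiff ℝ ∞ q)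
    (hd : ∀ v, HasDerivAt Q (q v) v) (z : ℂ) :
    Lap (fun z => Q (Complex.normSq z)) z
      = 4 * q (Complex.normSq z) + 4 * Complex.normSq z * deriv q (Complex.normSq z) := by
  have hdq : ∀ v, HasDerivAt q (deriv q v) v := fun v =>
    ((hq.differentiable (by simp)) v).hasDerivAt
  have D1 : Differentiable ℝ (fun z : ℂ => Q (Complex.normSq z)) :=
    (hQ.comp contDiff_normSq).differentiable (by simp)
  have n0 : ∀ z : ℂ, HasDerivAt (fun t : ℝ => Complex.normSq (z + t • cdir 0)) (2 * z.re) 0 := by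
    intro z
    simp_rw [normSq_line_zero]
    exact hasDerivAt_sq_line _ _
  have n1 : ∀ z : ℂ, HasDerivAt (fun t : ℝ => Complex.normSq (z + t • cdir 1)) (2 * z.im) 0 := by
    intro z
    simp_rw [normSq_line_one, add_comm (z.re * z.re)]
    exact hasDerivAt_sq_line _ _
  have comp : ∀ (i : Fin 2) (z : ℂ) (a : ℝ) (R r : ℝ → ℝ), (∀ v, HasDerivAt R (r v) v) →
      HasDerivAt (fun t : ℝ => Complex.normSq (z + t • cdir i)) a 0 →
      HasDerivAt (fun t : ℝ => R (Complex.normSq (z + t • cdir i)))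
        (r (Complex.normSq z) * a) 0 := by
    intro i z a R r hR hn
    have h1 := hR (Complex.normSq (z + (0 : ℝ) • cdir i))
    have h2 := h1.comp (0 : ℝ) hn
    simp only [zero_smul, add_zero] at h2
    exact h2
  have p0 : pd 0 (fun z => Q (Complex.normSq z))
      = fun z => q (Complex.normSq z) * (2 * z.re) := by
    funext z
    exact pd_eq_of_hasDerivAt (D1 z) (comp 0 z _ Q q hd (n0 z))
  have p1 : pd 1 (fun z => Q (Complex.normSq z))
      = fun z => q (Complex.normSq z) * (2 * z.im) := by
    funext z
    exact pd_eq_of_hasDerivAt (D1 z) (comp 1 z _ Q q hd (n1 z))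
  have Dq : Differentiable ℝ (fun z : ℂ => q (Complex.normSq z)) :=
    (hq.comp contDiff_normSq).differentiable (by simp)
  have p00 : pd 0 (fun z => q (Complex.normSq z) * (2 * z.re)) z
      = deriv q (Complex.normSq z) * (2 * z.re) * (2 * z.re) + q (Complex.normSq z) * 2 := by
    refine pd_eq_of_hasDerivAt ?_ ?_
    · exact (Dq z).mul ((Complex.reCLM.differentiableAt (x := z)).const_mul 2)
    · have hl : HasDerivAt (fun t : ℝ => 2 * (z + t • cdir 0).re) 2 0 := by
        have : (fun t : ℝ => 2 * (z + t • cdir 0).re) = fun t => 2 * (z.re + t) := by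
          funext t; simp [cdir]
        rw [this]
        simpa using ((hasDerivAt_id (0:ℝ)).const_add z.re).const_mul 2
      refine ((comp 0 z _ q _ hdq (n0 z)).mul hl).congr_deriv ?_
      simp
  have p11 : pd 1 (fun z => q (Complex.normSq z) * (2 * z.im)) z
      = deriv q (Complex.normSq z) * (2 * z.im) * (2 * z.im) + q (Complex.normSq z) * 2 := by
    refine pd_eq_of_hasDerivAt ?_ ?_
    · exact (Dq z).mul ((Complex.imCLM.differentiableAt (x := z)).const_mul 2)
    · have hl : HasDerivAt (fun t : ℝ => 2 * (z + t • cdir 1).im) 2 0 := by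
        have : (fun t : ℝ => 2 * (z + t • cdir 1).im) = fun t => 2 * (z.im + t) := by
          funext t; simp [cdir]
        rw [this]
        simpa using ((hasDerivAt_id (0:ℝ)).const_add z.im).const_mul 2
      refine ((comp 1 z _ q _ hdq (n1 z)).mul hl).congr_deriv ?_
      simp
  unfold Lap
  rw [p0, p1, p00, p11, Complex.normSq_apply]
  ring

lemma isKer_radial {F : ℝ → ℝ} (hF : ContDiff ℝ ∞ F) (h0 : ∀ v, 1 < v → F v = 0) :
    IsKer (fun z => F (Complex.normSq z)) := by
  refine ⟨hF.comp contDiff_normSq, closure_minimal ?_ Metric.isClosed_closedBall⟩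
  intro z hz
  rw [Function.mem_support] at hz
  rw [mem_closedBall_zero_iff]
  by_contra hlt
  push Not at hlt
  refine hz (h0 _ ?_)
  rw [Complex.normSq_eq_norm_sq]
  nlinarith

/-- The kernels driving the argument: a mollifier `φ` and a potential `Ψ`, both supported in the
unit disc, such that the difference of `φ` at two consecutive dyadic scales is `ΔΨ`. With
`φ(z) = P'(|z|²)` and `Ψ(z) = Q(|z|²)` the identity reads `4 v Q'(v) = P(4v) - P(v)`; since `P` is
chosen constant near `0` and on `[1, ∞)`, this defines a smooth `Q'` vanishing on `[1, ∞)`. -/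
lemma exists_kernels : ∃ φ Ψ : ℂ → ℝ, IsKer φ ∧ IsKer Ψ ∧ ∫ ζ, φ ζ = 1 ∧
    ∀ z, Lap Ψ z = 4 * φ ((2 : ℝ) • z) - φ z := by
  set P : ℝ → ℝ := fun v => Real.smoothTransition (2 * v - 1) with hP
  have P_smooth : ContDiff ℝ ∞ P :=
    Real.smoothTransition.contDiff.comp (by fun_prop)
  have P_lo : ∀ v, v ≤ 1 / 2 → P v = 0 := fun v hv =>
    Real.smoothTransition.zero_of_nonpos (by linarith)
  have P_hi : ∀ v, 1 ≤ v → P v = 1 := fun v hv =>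
    Real.smoothTransition.one_of_one_le (by linarith)
  have P_mono : Monotone P := fun a b hab => Real.smoothTransition.monotone (by linarith)
  have dP_smooth : ContDiff ℝ ∞ (deriv P) := (contDiff_infty_iff_deriv.1 P_smooth).2
  have P_diff : Differentiable ℝ P := P_smooth.differentiable (by simp)
  set q : ℝ → ℝ := fun v => (P (4 * v) - P v) / (4 * v) with hq
  have q_smooth : ContDiff ℝ ∞ q := by
    rw [contDiff_iff_contDiffAt]
    intro v
    rcases lt_or_ge v (1 / 8) with hv | hv
    · have : q =ᶠ[𝓝 v] fun _ => 0 := by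
        filter_upwards [Iio_mem_nhds hv] with w hw
        have hw' : w < 1 / 8 := hw
        simp [hq, P_lo (4 * w) (by linarith), P_lo w (by linarith)]
      exact contDiffAt_const.congr_of_eventuallyEq this
    · have h1 : ContDiff ℝ ∞ fun v => P (4 * v) - P v :=
        (P_smooth.comp (contDiff_const.mul contDiff_id)).sub P_smooth
      exact h1.contDiffAt.div (by fun_prop) (by linarith)
  have q_hi : ∀ v, 1 ≤ v → q v = 0 := fun v hv => by
    simp [hq, P_hi (4 * v) (by linarith), P_hi v hv]
  have q_mul : ∀ v, 4 * v * q v = P (4 * v) - P v := by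
    intro v
    rcases eq_or_ne v 0 with rfl | hv
    · simp
    · simp only [hq]
      field_simp
  set Q : ℝ → ℝ := fun v => ∫ x in (1:ℝ)..v, q x with hQ
  have Q_der : ∀ v, HasDerivAt Q (q v) v := fun v =>
    intervalIntegral.integral_hasDerivAt_right (q_smooth.continuous.intervalIntegrable _ _)
      (q_smooth.continuous.stronglyMeasurableAtFilter _ _) q_smooth.continuous.continuousAt
  have Q_smooth : ContDiff ℝ ∞ Q := by
    rw [contDiff_infty_iff_deriv]
    refine ⟨fun v => (Q_der v).differentiableAt, ?_⟩
    rw [show deriv Q = q from funext fun v => (Q_der v).deriv]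
    exact q_smooth
  have Q_hi : ∀ v, 1 < v → Q v = 0 := by
    intro v hv
    have : ∫ x in (1:ℝ)..v, q x = ∫ x in (1:ℝ)..v, (0:ℝ) := by
      refine intervalIntegral.integral_congr fun x hx => ?_
      rw [Set.uIcc_of_le hv.le] at hx
      exact q_hi x hx.1
    simpa [hQ] using this
  have dP_hi : ∀ v, 1 < v → deriv P v = 0 := by
    intro v hv
    have : P =ᶠ[𝓝 v] fun _ => 1 := by
      filter_upwards [Ioi_mem_nhds hv] with w hw using P_hi w (le_of_lt hw)
    rw [this.deriv_eq]
    simp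
  have kφ := isKer_radial dP_smooth dP_hi
  have kΨ := isKer_radial Q_smooth Q_hi
  have lap : ∀ z, Lap (fun z => Q (Complex.normSq z)) z
      = 4 * deriv P (Complex.normSq ((2 : ℝ) • z)) - deriv P (Complex.normSq z) := by
    intro z
    rw [Lap_radial Q_smooth q_smooth Q_der]
    set v := Complex.normSq z
    have hv : Complex.normSq ((2 : ℝ) • z) = 4 * v := by
      simp only [v, Complex.normSq_apply, Complex.real_smul, Complex.mul_re, Complex.mul_im,
        Complex.ofReal_re, Complex.ofReal_im]
      ring
    rw [hv]
    -- differentiate `4 v q(v) = P(4v) - P(v)`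
    have e1 : HasDerivAt (fun v => 4 * v * q v) (4 * q v + 4 * v * deriv q v) v := by
      refine (((hasDerivAt_id v).const_mul 4).mul
        ((q_smooth.differentiable (by simp)) v).hasDerivAt).congr_deriv ?_
      simp
    have e2 : HasDerivAt (fun v => P (4 * v) - P v) (4 * deriv P (4 * v) - deriv P v) v := by
      have h4 : HasDerivAt (fun v : ℝ => 4 * v) 4 v := by
        simpa using (hasDerivAt_id v).const_mul (4:ℝ)
      have h1 := (P_diff (4 * v)).hasDerivAt.comp v h4
      have := h1.sub (P_diff v).hasDerivAt
      rw [mul_comm (deriv P (4 * v)) 4] at this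
      exact this
    rw [show (fun v => 4 * v * q v) = fun v => P (4 * v) - P v from funext q_mul] at e1
    exact e1.unique e2
  -- the radial profile `P'` is nonnegative and not identically zero, hence has positive mass
  have hex : ∃ v, 0 ≤ v ∧ deriv P v ≠ 0 := by
    obtain ⟨v, hv, hv'⟩ := exists_deriv_eq_slope P (show (0:ℝ) < 1 by norm_num)
      P_diff.continuous.continuousOn P_diff.differentiableOn
    refine ⟨v, hv.1.le, ?_⟩
    rw [hv', P_hi 1 le_rfl, P_lo 0 (by norm_num)]
    norm_num
  obtain ⟨v, hv0, hv⟩ := hex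
  have hI : 0 < ∫ ζ : ℂ, deriv P (Complex.normSq ζ) := by
    refine kφ.cont.integral_pos_of_hasCompactSupport_nonneg_nonzero kφ.compact
      (fun z => P_mono.deriv_nonneg) (x := ((Real.sqrt v : ℝ) : ℂ)) ?_
    simpa [Complex.normSq_ofReal, Real.mul_self_sqrt hv0] using hv
  set I := ∫ ζ : ℂ, deriv P (Complex.normSq ζ) with hIdef
  refine ⟨fun z => (fun v => I⁻¹ * deriv P v) (Complex.normSq z),
    fun z => (fun v => I⁻¹ * Q v) (Complex.normSq z),
    isKer_radial (contDiff_const.mul dP_smooth) (fun v hv => by simp [dP_hi v hv]),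
    isKer_radial (contDiff_const.mul Q_smooth) (fun v hv => by simp [Q_hi v hv]), ?_, ?_⟩
  · simp only
    rw [integral_const_mul, ← hIdef]
    exact inv_mul_cancel₀ hI.ne'
  · intro z
    have h1 := lap z
    rw [Lap_radial Q_smooth q_smooth Q_der] at h1
    have hd' : deriv (fun v => I⁻¹ * q v) (Complex.normSq z)
        = I⁻¹ * deriv q (Complex.normSq z) :=
      deriv_const_mul _ ((q_smooth.differentiable (by simp)) _)
    rw [Lap_radial (Q := fun v => I⁻¹ * Q v) (q := fun v => I⁻¹ * q v)
      (contDiff_const.mul Q_smooth) (contDiff_const.mul q_smooth)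
      (fun v => (Q_der v).const_mul _), hd']
    simp only
    linear_combination I⁻¹ * h1

/-! ### Lipschitz and Hölder bounds from partial derivatives -/

lemma HasLineDerivAt.hasDerivAt_line {F : ℂ → ℝ} {L : ℝ} {z v : ℂ} {t : ℝ}
    (h : HasLineDerivAt ℝ F L (z + t • v) v) : HasDerivAt (fun τ : ℝ => F (z + τ • v)) L t := by
  have h0 : HasDerivAt (fun τ : ℝ => F (z + t • v + τ • v)) L (t - t) := by
    rw [sub_self]; exact h
  have h1 := h0.comp_sub_const t t
  refine h1.congr_of_eventuallyEq (Filter.Eventually.of_forall fun τ => ?_)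
  simp only [sub_smul]
  congr 1
  abel

lemma abs_sub_le_axis {c : ℂ} {ρ A : ℝ} {F F' : ℂ → ℝ} {i : Fin 2}
    (hd : ∀ z ∈ Metric.ball c ρ, HasLineDerivAt ℝ F (F' z) z (cdir i))
    (hA : ∀ z ∈ Metric.ball c ρ, |F' z| ≤ A) {x : ℂ} {T : ℝ} (hx : x ∈ Metric.ball c ρ)
    (hy : x + T • cdir i ∈ Metric.ball c ρ) : |F (x + T • cdir i) - F x| ≤ A * |T| := by
  have hmem : ∀ t ∈ Set.uIcc 0 T, x + t • cdir i ∈ Metric.ball c ρ := by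
    have hconv : Convex ℝ ((fun t : ℝ => x + t • cdir i) ⁻¹' Metric.ball c ρ) := by
      have := (convex_ball c ρ).affine_preimage (AffineMap.lineMap x (x + cdir i))
      have he : (fun t : ℝ => x + t • cdir i) = AffineMap.lineMap x (x + cdir i) := by
        funext t
        simp [AffineMap.lineMap_apply, add_comm]
      rw [he]
      exact this
    have := hconv.ordConnected.uIcc_subset (x := 0) (y := T) (by simpa using hx) hy
    exact fun t ht => this ht
  have := (convex_uIcc (0:ℝ) T).norm_image_sub_le_of_norm_hasDerivWithin_le (𝕜 := ℝ)
    (f := fun t : ℝ => F (x + t • cdir i)) (f' := fun t => F' (x + t • cdir i)) (C := A)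
    (fun t ht => (hd _ (hmem t ht)).hasDerivAt_line.hasDerivWithinAt)
    (fun t ht => hA _ (hmem t ht)) Set.left_mem_uIcc Set.right_mem_uIcc
  simpa using this

/-- Bounded partial derivatives on a disc give a Lipschitz bound: two points of a disc can be
joined inside it by two axis-parallel segments, because one of the two remaining corners of the
rectangle they span lies in the disc. -/
lemma abs_sub_le_of_partials {c : ℂ} {ρ A : ℝ} {F : ℂ → ℝ} {F' : Fin 2 → ℂ → ℝ}
    (hd : ∀ i, ∀ z ∈ Metric.ball c ρ, HasLineDerivAt ℝ F (F' i z) z (cdir i))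
    (hA : ∀ i, ∀ z ∈ Metric.ball c ρ, |F' i z| ≤ A) {x y : ℂ} (hx : x ∈ Metric.ball c ρ)
    (hy : y ∈ Metric.ball c ρ) : |F x - F y| ≤ 2 * A * dist x y := by
  have hA0 : 0 ≤ A := (abs_nonneg _).trans (hA 0 x hx)
  have main : ∀ i j : Fin 2, ∀ a b : ℝ, x = y + a • cdir i + b • cdir j → |a| ≤ dist x y →
      |b| ≤ dist x y → y + a • cdir i ∈ Metric.ball c ρ → |F x - F y| ≤ 2 * A * dist x y := by
    intro i j a b hxy ha hb hw
    have h1 := abs_sub_le_axis (hd i) (hA i) hy hw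
    have h2 := abs_sub_le_axis (T := b) (hd j) (hA j) hw (hxy ▸ hx)
    rw [← hxy] at h2
    have := abs_add_le (F x - F (y + a • cdir i)) (F (y + a • cdir i) - F y)
    rw [sub_add_sub_cancel] at this
    nlinarith [mul_le_mul_of_nonneg_left ha hA0, mul_le_mul_of_nonneg_left hb hA0]
  have hre : |x.re - y.re| ≤ dist x y := by
    rw [Complex.dist_eq]; exact Complex.abs_re_le_norm (x - y)
  have him : |x.im - y.im| ≤ dist x y := by
    rw [Complex.dist_eq]; exact Complex.abs_im_le_norm (x - y)
  have e1 : x = y + (x.re - y.re) • cdir 0 + (x.im - y.im) • cdir 1 := by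
    apply Complex.ext <;> simp [cdir]
  have e2 : x = y + (x.im - y.im) • cdir 1 + (x.re - y.re) • cdir 0 := by
    apply Complex.ext <;> simp [cdir]
  by_cases h : y + (x.re - y.re) • cdir 0 ∈ Metric.ball c ρ
  · exact main 0 1 _ _ e1 hre him h
  · refine main 1 0 _ _ e2 him hre ?_
    have hρ : 0 < ρ := Metric.pos_of_mem_ball hx
    rw [Metric.mem_ball, Complex.dist_eq] at h hx hy ⊢
    rw [← abs_of_nonneg (norm_nonneg _), ← abs_of_pos hρ, ← sq_lt_sq, Complex.sq_norm,
      Complex.normSq_apply] at h hx hy ⊢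
    simp [cdir] at h hx hy ⊢
    nlinarith

/-- Summing dyadic pieces: if the `j`-th term has size `s ^ α` and Lipschitz constant `s ^ (α - 1)`
at the scale `s = δ / 2 ^ j`, then the sum is `α`-Hölder. Scales finer than `dist x y` use the
first bound, coarser ones the second. -/
lemma holder_tsum {α : ℝ} (hα0 : 0 < α) (hα1 : α < 1) :
    ∃ C, 0 < C ∧ ∀ (δ : ℝ), 0 < δ → ∀ (A : ℝ), 0 ≤ A → ∀ (S : Set ℂ) (t : ℕ → ℂ → ℝ),
      (∀ j, ∀ x ∈ S, |t j x| ≤ A * (δ * (1 / 2) ^ j) ^ α) →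
      (∀ j, ∀ x ∈ S, ∀ y ∈ S, |t j x - t j y| ≤ A * (δ * (1 / 2) ^ j) ^ (α - 1) * dist x y) →
      (∀ x ∈ S, Summable fun j => t j x) ∧
      (∀ x ∈ S, |∑' j, t j x| ≤ C * A * δ ^ α) ∧
      (∀ x ∈ S, ∀ y ∈ S, |∑' j, t j x - ∑' j, t j y| ≤ C * A * dist x y ^ α) := by
  set q : ℝ := (1 / 2 : ℝ) ^ α with hq
  set p : ℝ := (1 / 2 : ℝ) ^ (α - 1) with hp
  have q0 : 0 < q := by positivity
  have q1 : q < 1 := Real.rpow_lt_one (by norm_num) (by norm_num) hα0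
  have p1 : 1 < p := Real.one_lt_rpow_of_pos_of_lt_one_of_neg (by norm_num) (by norm_num)
    (by linarith)
  have ppos : 0 < p - 1 := by linarith
  have qpos : 0 < 1 - q := by linarith
  have hsq : ∀ {δ : ℝ}, 0 < δ → ∀ j : ℕ, (δ * (1 / 2) ^ j) ^ α = δ ^ α * q ^ j := by
    intro δ hδ j
    rw [Real.mul_rpow hδ.le (by positivity), ← Real.rpow_natCast, ← Real.rpow_mul (by norm_num),
      mul_comm (j:ℝ), Real.rpow_mul (by norm_num), Real.rpow_natCast]
  have hsp : ∀ {δ : ℝ}, 0 < δ → ∀ j : ℕ,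
      (δ * (1 / 2) ^ j) ^ (α - 1) = δ ^ (α - 1) * p ^ j := by
    intro δ hδ j
    rw [Real.mul_rpow hδ.le (by positivity), ← Real.rpow_natCast, ← Real.rpow_mul (by norm_num),
      mul_comm (j:ℝ), Real.rpow_mul (by norm_num), Real.rpow_natCast]
  refine ⟨1 / (p - 1) + 4 / (1 - q), by positivity, ?_⟩
  intro δ hδ A hA S t h1 h2
  have hgeo : Summable fun j : ℕ => A * (δ * (1 / 2) ^ j) ^ α := by
    simp_rw [hsq hδ]
    exact ((summable_geometric_of_lt_one q0.le q1).mul_left _).mul_left _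
  have hsum : ∀ x ∈ S, Summable fun j => t j x := fun x hx =>
    Summable.of_norm_bounded hgeo fun j => h1 j x hx
  have hδα : 0 < δ ^ α := by positivity
  -- the part of the sum at scales at most `δ / 2 ^ N`
  have htail : ∀ N, ∀ x ∈ S,
      |∑' j, t (j + N) x| ≤ A * (δ * (1 / 2) ^ N) ^ α / (1 - q) := by
    intro N x hx
    have hg : HasSum (fun j : ℕ => A * (δ * (1 / 2) ^ N) ^ α * q ^ j)
        (A * (δ * (1 / 2) ^ N) ^ α * (1 - q)⁻¹) :=
      (hasSum_geometric_of_lt_one q0.le q1).mul_left _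
    refine tsum_of_norm_bounded (f := fun j => t (j + N) x) hg fun j => (h1 (j + N) x hx).trans (le_of_eq ?_)
    rw [hsq hδ, hsq hδ, pow_add]
    ring
  refine ⟨hsum, ?_, ?_⟩
  · intro x hx
    have := htail 0 x hx
    simp only [add_zero, pow_zero, mul_one] at this
    refine this.trans ?_
    have h4 : (1:ℝ) / (1 - q) ≤ 1 / (p - 1) + 4 / (1 - q) := by
      have : (1:ℝ) / (1 - q) ≤ 4 / (1 - q) := by gcongr; norm_num
      have : 0 ≤ 1 / (p - 1) := by positivity
      linarith
    calc A * δ ^ α / (1 - q) = (1 / (1 - q)) * (A * δ ^ α) := by ring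
      _ ≤ (1 / (p - 1) + 4 / (1 - q)) * (A * δ ^ α) := by gcongr
      _ = _ := by ring
  · intro x hx y hy
    rcases eq_or_ne x y with rfl | hxy
    · simp [Real.zero_rpow hα0.ne']
    set d := dist x y with hd
    have hd0 : 0 < d := dist_pos.2 hxy
    have hdα : 0 < d ^ α := by positivity
    -- a scale comparable to `d`, or the coarsest one
    have hN : ∃ N : ℕ, (δ * (1 / 2) ^ N ≤ 2 * d) ∧ (N = 0 ∨ d ≤ δ * (1 / 2) ^ N) := by
      rcases le_or_gt δ d with h | h
      · exact ⟨0, by simp; linarith, Or.inl rfl⟩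
      · obtain ⟨N, hN1, hN2⟩ := exists_nat_pow_near_of_lt_one (x := d / δ) (y := (1/2 : ℝ))
          (by positivity) ((div_le_one hδ).2 h.le) (by norm_num) (by norm_num)
        rw [lt_div_iff₀ hδ, pow_succ] at hN1
        rw [div_le_iff₀ hδ] at hN2
        exact ⟨N, by linarith, Or.inr (by linarith)⟩
    obtain ⟨N, hN1, hN2⟩ := hN
    have split : ∑' j, t j x - ∑' j, t j y = ∑ j ∈ Finset.range N, (t j x - t j y)
        + (∑' j, t (j + N) x - ∑' j, t (j + N) y) := by
      rw [← (hsum x hx).sum_add_tsum_nat_add N, ← (hsum y hy).sum_add_tsum_nat_add N,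
        Finset.sum_sub_distrib]
      ring
    have hfine : A * (δ * (1 / 2) ^ N) ^ α / (1 - q) ≤ 2 * (A * d ^ α) / (1 - q) := by
      have h5 : (δ * (1 / 2) ^ N) ^ α ≤ 2 * d ^ α := by
        calc (δ * (1 / 2) ^ N) ^ α ≤ (2 * d) ^ α := Real.rpow_le_rpow (by positivity) hN1 hα0.le
          _ = 2 ^ α * d ^ α := Real.mul_rpow (by norm_num) hd0.le
          _ ≤ 2 ^ (1:ℝ) * d ^ α := by
            gcongr
            norm_num
          _ = 2 * d ^ α := by rw [Real.rpow_one]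
      have := mul_le_mul_of_nonneg_left h5 hA
      refine div_le_div_of_nonneg_right ?_ qpos.le
      linarith
    have hcoarse : |∑ j ∈ Finset.range N, (t j x - t j y)| ≤ A * d ^ α / (p - 1) := by
      rcases hN2 with rfl | hN2
      · simp only [Finset.range_zero, Finset.sum_empty, abs_zero]
        positivity
      · have h6 : (δ * (1 / 2) ^ N) ^ (α - 1) ≤ d ^ (α - 1) :=
          Real.rpow_le_rpow_of_nonpos hd0 hN2 (by linarith)
        have h7 : d ^ (α - 1) * d = d ^ α := by
          rw [← Real.rpow_add_one hd0.ne']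
          congr 1
          ring
        calc |∑ j ∈ Finset.range N, (t j x - t j y)|
            ≤ ∑ j ∈ Finset.range N, |t j x - t j y| := Finset.abs_sum_le_sum_abs _ _
          _ ≤ ∑ j ∈ Finset.range N, A * d * δ ^ (α - 1) * p ^ j := by
            refine Finset.sum_le_sum fun j _ => (h2 j x hx y hy).trans (le_of_eq ?_)
            rw [hsp hδ]
            ring
          _ = A * d * δ ^ (α - 1) * ((p ^ N - 1) / (p - 1)) := by
            rw [← Finset.mul_sum, geom_sum_eq p1.ne']
          _ ≤ A * d * δ ^ (α - 1) * (p ^ N / (p - 1)) := by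
            gcongr
            linarith
          _ = A * (d * (δ * (1 / 2) ^ N) ^ (α - 1)) / (p - 1) := by
            rw [hsp hδ]; ring
          _ ≤ A * (d * d ^ (α - 1)) / (p - 1) := by gcongr
          _ = A * d ^ α / (p - 1) := by rw [mul_comm d, h7]
    have t1 := htail N x hx
    have t2 := htail N y hy
    rw [split]
    calc |∑ j ∈ Finset.range N, (t j x - t j y) + (∑' j, t (j + N) x - ∑' j, t (j + N) y)|
        ≤ |∑ j ∈ Finset.range N, (t j x - t j y)|
          + (|∑' j, t (j + N) x| + |∑' j, t (j + N) y|) :=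
          (abs_add_le _ _).trans (by gcongr; exact abs_sub _ _)
      _ ≤ A * d ^ α / (p - 1) + (2 * (A * d ^ α) / (1 - q) + 2 * (A * d ^ α) / (1 - q)) := by
          gcongr
          · exact t1.trans hfine
          · exact t2.trans hfine
      _ = (1 / (p - 1) + 4 / (1 - q)) * A * d ^ α := by ring

/-- Termwise differentiation of a series in a coordinate direction. -/
lemma hasLineDerivAt_tsum {Ω : Set ℂ} (hΩ : IsOpen Ω) {t t' : ℕ → ℂ → ℝ} {v : ℂ} {u : ℕ → ℝ}
    (hu : Summable u) (hd : ∀ j, ∀ z ∈ Ω, HasLineDerivAt ℝ (t j) (t' j z) z v)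
    (hb : ∀ j, ∀ z ∈ Ω, |t' j z| ≤ u j) (hs : ∀ z ∈ Ω, Summable fun j => t j z)
    {z : ℂ} (hz : z ∈ Ω) :
    HasLineDerivAt ℝ (fun z => ∑' j, t j z) (∑' j, t' j z) z v := by
  have hopen : {τ : ℝ | z + τ • v ∈ Ω} ∈ 𝓝 (0:ℝ) := by
    refine (hΩ.preimage (f := fun τ : ℝ => z + τ • v) (by fun_prop)).mem_nhds ?_
    simpa using hz
  obtain ⟨ε, hε, hsub⟩ := Metric.mem_nhds_iff.1 hopen
  have := hasDerivAt_tsum_of_isPreconnected (y₀ := (0:ℝ)) (y := (0:ℝ))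
    (g := fun j τ => t j (z + τ • v)) (g' := fun j τ => t' j (z + τ • v)) hu
    (Metric.isOpen_ball (x := (0:ℝ)) (ε := ε)) (convex_ball _ _).isPreconnected
    (fun j τ hτ => (hd j _ (hsub hτ)).hasDerivAt_line) (fun j τ hτ => hb j _ (hsub hτ))
    (Metric.mem_ball_self hε) (by simpa using hs z hz) (Metric.mem_ball_self hε)
  simpa [HasLineDerivAt] using this

/-! ### The weak equation and its dyadic form -/

/-- `Δf = g` on `Ω` in the sense of distributions. -/
def WeakLap (Ω : Set ℂ) (f g : ℂ → ℝ) : Prop :=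
  ∀ ψ : ℂ → ℝ, ContDiff ℝ ∞ ψ → HasCompactSupport ψ → tsupport ψ ⊆ Ω →
    ∫ z, f z * Lap ψ z = ∫ z, g z * ψ z

lemma pd_eq_zero {Θ : ℂ → ℝ} {i : Fin 2} {z : ℂ} (hz : z ∉ tsupport Θ) : pd i Θ z = 0 :=
  image_eq_zero_of_notMem_tsupport fun h => hz (tsupport_pd Θ i h)

lemma Lap_eq_zero {Θ : ℂ → ℝ} {z : ℂ} (hz : z ∉ tsupport Θ) : Lap Θ z = 0 := by
  have : ∀ i, pd i (pd i Θ) z = 0 := fun i => pd_eq_zero fun h => hz (tsupport_pd Θ i h)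
  simp [Lap, this]

lemma WeakLap.indicator {Ω : Set ℂ} {f g : ℂ → ℝ} (h : WeakLap Ω f g) :
    WeakLap Ω (Ω.indicator f) (Ω.indicator g) := by
  intro ψ h1 h2 h3
  convert h ψ h1 h2 h3 using 2 <;> funext z
  · by_cases hz : z ∈ Ω
    · simp [hz]
    · simp [Lap_eq_zero fun h => hz (h3 h)]
  · by_cases hz : z ∈ Ω
    · simp [hz]
    · simp [image_eq_zero_of_notMem_tsupport fun h => hz (h3 h)]

lemma pd_scale {Θ : ℂ → ℝ} (h : ContDiff ℝ ∞ Θ) (s : ℝ) (z : ℂ) (i : Fin 2) (a : ℝ) :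
    pd i (fun ζ => a * Θ (s⁻¹ • (z - ζ))) = fun ζ => (-s⁻¹ * a) * pd i Θ (s⁻¹ • (z - ζ)) := by
  funext ζ
  have hΘ : Differentiable ℝ Θ := h.differentiable (by simp)
  refine pd_eq_of_hasDerivAt ?_ ?_
  · exact ((hΘ _).comp ζ (by fun_prop)).const_mul a
  · have hd : HasDerivAt (fun t : ℝ => s⁻¹ • (z - (ζ + t • cdir i))) (s⁻¹ • -(cdir i)) 0 := by
      have := ((((hasDerivAt_id (0:ℝ)).smul_const (cdir i)).const_add ζ).const_sub z).const_smul s⁻¹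
      rw [one_smul] at this
      exact this
    have h1 := ((hΘ (s⁻¹ • (z - (ζ + (0:ℝ) • cdir i)))).hasFDerivAt.comp_hasDerivAt (0:ℝ) hd).const_mul a
    rw [map_smul, map_neg, zero_smul, add_zero, smul_eq_mul] at h1
    refine h1.congr_deriv ?_
    unfold pd
    ring

lemma Lap_scale {Θ : ℂ → ℝ} (h : ContDiff ℝ ∞ Θ) (s : ℝ) (z ζ : ℂ) :
    Lap (fun ζ => Θ (s⁻¹ • (z - ζ))) ζ = (s ^ 2)⁻¹ * Lap Θ (s⁻¹ • (z - ζ)) := by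
  have e : ∀ i, pd i (pd i (fun ζ => Θ (s⁻¹ • (z - ζ)))) ζ
      = (s ^ 2)⁻¹ * pd i (pd i Θ) (s⁻¹ • (z - ζ)) := by
    intro i
    have h1 := pd_scale h s z i 1
    simp only [one_mul, mul_one] at h1
    rw [h1, pd_scale (contDiff_pd h i)]
    simp only
    rw [← inv_pow]
    ring
  unfold Lap
  rw [e, e]
  ring

lemma tsupport_scale {Θ : ℂ → ℝ} (h : IsKer Θ) {s : ℝ} (hs : 0 < s) (z : ℂ) :
    tsupport (fun ζ => Θ (s⁻¹ • (z - ζ))) ⊆ Metric.closedBall z s := by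
  refine closure_minimal (fun ζ hζ => ?_) Metric.isClosed_closedBall
  rw [Function.mem_support] at hζ
  rw [Metric.mem_closedBall]
  by_contra hlt
  refine hζ (h.eq_zero ?_)
  rw [norm_smul, norm_inv, Real.norm_eq_abs, abs_of_pos hs, ← div_eq_inv_mul, lt_div_iff₀ hs,
    one_mul, ← dist_eq_norm, dist_comm]
  exact not_le.1 hlt

/-- Passing from scale `s` to scale `s / 2`, the mollification of `f` changes by a convolution of
`g`: test the weak equation against a rescaled `Ψ`. -/
lemma moll_step {φ Ψ : ℂ → ℝ} (hφ : IsKer φ) (hΨ : IsKer Ψ)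
    (hL : ∀ z, Lap Ψ z = 4 * φ ((2 : ℝ) • z) - φ z) {Ω : Set ℂ} {f g : ℂ → ℝ}
    (hf : Integrable f) (hw : WeakLap Ω f g) {s : ℝ} (hs : 0 < s) {z : ℂ}
    (hz : Metric.closedBall z s ⊆ Ω) :
    ((s / 2) ^ 2)⁻¹ * M (s / 2) φ f z - (s ^ 2)⁻¹ * M s φ f z = M s Ψ g z := by
  have hsm : ContDiff ℝ ∞ fun ζ => Ψ (s⁻¹ • (z - ζ)) := hΨ.smooth.comp (by fun_prop)
  have hts := tsupport_scale hΨ hs z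
  have := hw _ hsm (HasCompactSupport.of_support_subset_isCompact (isCompact_closedBall z s)
    (subset_closure.trans hts)) (hts.trans hz)
  have e1 : ∀ ζ, (2:ℝ) • (s⁻¹ • (z - ζ)) = (s / 2)⁻¹ • (z - ζ) := by
    intro ζ
    rw [smul_smul]
    congr 1
    field_simp
  have e2 : ∀ ζ, f ζ * Lap (fun ζ => Ψ (s⁻¹ • (z - ζ))) ζ
      = (s ^ 2)⁻¹ * 4 * (φ ((s / 2)⁻¹ • (z - ζ)) * f ζ)
        - (s ^ 2)⁻¹ * (φ (s⁻¹ • (z - ζ)) * f ζ) := by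
    intro ζ
    rw [Lap_scale hΨ.smooth, hL, e1]
    ring
  simp_rw [e2] at this
  rw [integral_sub ((hφ.integrable_M _ hf z).const_mul _) ((hφ.integrable_M _ hf z).const_mul _),
    integral_const_mul, integral_const_mul] at this
  have e3 : ∫ ζ, g ζ * Ψ (s⁻¹ • (z - ζ)) = M s Ψ g z := by
    simp_rw [mul_comm (g _)]
    rfl
  rw [e3] at this
  rw [← this]
  unfold M
  congr 2
  field_simp
  norm_num

/-- Mollifications converge at points of continuity. -/
lemma tendsto_moll {φ : ℂ → ℝ} (hφ : IsKer φ) (h1 : ∫ ζ, φ ζ = 1) {f : ℂ → ℝ}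
    (hf : Integrable f) {z : ℂ} (hz : ContinuousAt f z) {s : ℕ → ℝ} (hs : ∀ j, 0 < s j)
    (hs0 : Tendsto s atTop (𝓝 0)) :
    Tendsto (fun j => ((s j) ^ 2)⁻¹ * M (s j) φ f z) atTop (𝓝 (f z)) := by
  rw [Metric.tendsto_atTop]
  intro ε hε
  set K := ∫ ζ, |φ ζ| with hK
  have hK0 : 0 ≤ K := integral_nonneg fun _ => abs_nonneg _
  obtain ⟨η, hη, hη'⟩ := Metric.continuousAt_iff.1 hz (ε / (K + 1)) (by positivity)
  obtain ⟨N, hN⟩ := (Metric.tendsto_atTop.1 hs0) η hη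
  refine ⟨N, fun j hj => ?_⟩
  have hsj : s j < η := by
    have := hN j hj
    rw [Real.dist_eq, sub_zero] at this
    exact (le_abs_self _).trans_lt this
  have hb := abs_M_le hφ (hs j) (G := fun ζ => f ζ - f z) (z := z) (B := ε / (K + 1))
    (fun ζ hζ => by
      have := hη' (hζ.trans_lt hsj)
      rw [Real.dist_eq] at this
      exact this.le)
  rw [M_sub_const hφ (hs j) hf, h1, mul_one] at hb
  have hp : 0 < s j ^ 2 := pow_pos (hs j) 2
  have hsj0 : s j ≠ 0 := (hs j).ne'
  rw [Real.dist_eq]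
  have e : (s j ^ 2)⁻¹ * M (s j) φ f z - f z
      = (s j ^ 2)⁻¹ * (M (s j) φ f z - s j ^ 2 * f z) := by
    field_simp
  rw [e, abs_mul, abs_of_pos (inv_pos.2 hp)]
  calc (s j ^ 2)⁻¹ * |M (s j) φ f z - s j ^ 2 * f z|
      ≤ (s j ^ 2)⁻¹ * (K * s j ^ 2 * (ε / (K + 1))) := by gcongr
    _ = K / (K + 1) * ε := by field_simp
    _ < 1 * ε := by
      gcongr
      rw [div_lt_one (by positivity)]
      linarith
    _ = ε := one_mul ε

/-! ### The estimate for Hölder continuous right-hand sides -/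

/-- `g ∈ C^{m+α}(Ω)` with norm at most `B`, the integer and fractional parts of the exponent being
given separately. -/
def HNormLe (Ω : Set ℂ) (m : ℕ) (α : ℝ) (g : ℂ → ℝ) (B : ℝ) : Prop :=
  ∃ D : List (Fin 2) → ℂ → ℝ, D [] = g ∧
    (∀ l : List (Fin 2), l.length < m → ∀ i : Fin 2, ∀ s ∈ Ω,
      HasPartialAtC (D l) (cdir i) s (D (i :: l) s)) ∧
    ∀ l : List (Fin 2), l.length ≤ m →
      (∀ s ∈ Ω, |D l s| ≤ B) ∧
      (∀ s ∈ Ω, ∀ t ∈ Ω, |D l s - D l t| ≤ B * dist s t ^ α)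

lemma HNormLe.mono {Ω Ω' : Set ℂ} {m m' : ℕ} {α B B' : ℝ} {g : ℂ → ℝ} (h : HNormLe Ω m α g B)
    (hΩ : Ω' ⊆ Ω) (hm : m' ≤ m) (hB : B ≤ B') : HNormLe Ω' m' α g B' := by
  obtain ⟨D, h0, h1, h2⟩ := h
  refine ⟨D, h0, fun l hl i s hs => h1 l (hl.trans_le hm) i s (hΩ hs), fun l hl =>
    ⟨fun s hs => ((h2 l (hl.trans hm)).1 s (hΩ hs)).trans hB, fun s hs t ht =>
      ((h2 l (hl.trans hm)).2 s (hΩ hs) t (hΩ ht)).trans ?_⟩⟩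
  gcongr

lemma continuousOn_of_holder {Ω : Set ℂ} {α B : ℝ} (hα : 0 < α) {g : ℂ → ℝ}
    (h : ∀ s ∈ Ω, ∀ t ∈ Ω, |g s - g t| ≤ B * dist s t ^ α) : ContinuousOn g Ω := by
  intro z hz
  rw [ContinuousWithinAt, tendsto_iff_dist_tendsto_zero]
  have hc : Tendsto (fun w => B * dist w z ^ α) (𝓝[Ω] z) (𝓝 0) := by
    have : ContinuousAt (fun w => B * dist w z ^ α) z := by
      refine continuousAt_const.mul (ContinuousAt.rpow_const (by fun_prop) (Or.inr hα.le))
    have h2 := this.tendsto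
    rw [dist_self, Real.zero_rpow hα.ne', mul_zero] at h2
    exact h2.mono_left nhdsWithin_le_nhds
  refine squeeze_zero' (Filter.Eventually.of_forall fun _ => dist_nonneg) ?_ hc
  filter_upwards [self_mem_nhdsWithin] with w hw
  exact h w hw z hz

lemma integrable_indicator_ball {c : ℂ} {R B : ℝ} {f : ℂ → ℝ}
    (hf : ContinuousOn f (Metric.ball c R)) (hB : ∀ z ∈ Metric.ball c R, |f z| ≤ B) :
    Integrable ((Metric.ball c R).indicator f) := by
  rw [integrable_indicator_iff measurableSet_ball]
  exact IntegrableOn.of_bound measure_ball_lt_top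
    (hf.aestronglyMeasurable measurableSet_ball) B
    (ae_restrict_of_forall_mem measurableSet_ball hB)

lemma exists_kernel_bound (φ Ψ : ℂ → ℝ) : ∃ K, 0 ≤ K ∧ ∀ l : List (Fin 2), l.length ≤ 3 →
    (∫ ζ, |pdL l φ ζ|) ≤ K ∧ (∫ ζ, |pdL l Ψ ζ|) ≤ K := by
  have hfin : {l : List (Fin 2) | l.length ≤ 3}.Finite := List.finite_length_le _ _
  obtain ⟨K, hK⟩ := (hfin.image fun l => (∫ ζ, |pdL l φ ζ|) + ∫ ζ, |pdL l Ψ ζ|).bddAbove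
  have hn : ∀ F : ℂ → ℝ, 0 ≤ ∫ ζ, |F ζ| := fun F => integral_nonneg fun _ => abs_nonneg _
  have hK' : ∀ l : List (Fin 2), l.length ≤ 3 →
      (∫ ζ, |pdL l φ ζ|) + (∫ ζ, |pdL l Ψ ζ|) ≤ K := fun l hl => hK ⟨l, hl, rfl⟩
  refine ⟨K, ?_, fun l hl => ⟨?_, ?_⟩⟩
  · have := hK' [] (by simp)
    linarith [hn (pdL [] φ), hn (pdL [] Ψ)]
  · linarith [hn (pdL l Ψ), hK' l hl]
  · linarith [hn (pdL l φ), hK' l hl]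

/-- The convolution with a rescaled kernel, differentiated along `l`. -/
def dM (s : ℝ) (Θ G : ℂ → ℝ) (l : List (Fin 2)) (z : ℂ) : ℝ :=
  s⁻¹ ^ l.length * M s (pdL l Θ) G z

lemma hasLineDerivAt_dM {Θ : ℂ → ℝ} (h : IsKer Θ) (s : ℝ) {G : ℂ → ℝ} (hG : Integrable G)
    (l : List (Fin 2)) (z : ℂ) (i : Fin 2) :
    HasLineDerivAt ℝ (dM s Θ G l) (dM s Θ G (i :: l) z) z (cdir i) := by
  have := HasDerivAt.const_mul (s⁻¹ ^ l.length) (hasLineDerivAt_M (h.pdL l) s hG z i)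
  refine this.congr_deriv ?_
  simp only [dM, List.length_cons, pdL]
  ring

/-- Crude bound for the differentiated convolution; used at one fixed scale. -/
lemma abs_dM_le {Θ : ℂ → ℝ} (h : IsKer Θ) {K : ℝ} {l : List (Fin 2)} (hl : l.length ≤ 3)
    (hK : (∫ ζ, |pdL l Θ ζ|) ≤ K) {s B : ℝ} (hs : 0 < s) (hs1 : s ≤ 1) (hB0 : 0 ≤ B) {G : ℂ → ℝ}
    (hB : ∀ ζ, |G ζ| ≤ B) (z : ℂ) : |dM s Θ G l z| ≤ s⁻¹ ^ 3 * K * s ^ 2 * B := by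
  have h1 := abs_M_le (h.pdL l) hs (z := z) fun ζ _ => hB ζ
  have h2 : (1:ℝ) ≤ s⁻¹ := (one_le_inv₀ hs).2 hs1
  rw [dM, abs_mul, abs_of_nonneg (by positivity)]
  calc s⁻¹ ^ l.length * |M s (pdL l Θ) G z|
      ≤ s⁻¹ ^ 3 * (K * s ^ 2 * B) := by
        gcongr
        · exact h1.trans (by gcongr)
    _ = _ := by ring

/-- Bounds for a dyadic piece and its derivatives. For `l ≠ []` the kernel has mean zero and the
Hölder bound on `G` is used, which gains a factor `s ^ α`. -/
lemma abs_dM_le_holder {Θ : ℂ → ℝ} (h : IsKer Θ) {K : ℝ} {l : List (Fin 2)}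
    (hK : (∫ ζ, |pdL l Θ ζ|) ≤ K) {s B α : ℝ} (hα0 : 0 < α) (hα1 : α < 1) (hs : 0 < s)
    (hs1 : s ≤ 1) (hK0 : 0 ≤ K) (hB0 : 0 ≤ B) {G : ℂ → ℝ} (hG : Integrable G)
    (hB : ∀ ζ, |G ζ| ≤ B) {z : ℂ}
    (hH : ∀ ζ, dist ζ z ≤ s → |G ζ - G z| ≤ B * dist ζ z ^ α) :
    (l.length ≤ 2 → |dM s Θ G l z| ≤ K * B * s ^ α) ∧
    (l.length ≤ 3 → l ≠ [] → |dM s Θ G l z| ≤ K * B * s ^ (α - 1)) := by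
  have h2 : (1:ℝ) ≤ s⁻¹ := (one_le_inv₀ hs).2 hs1
  have hKB : 0 ≤ K * B := mul_nonneg hK0 hB0
  have hsα : 0 < s ^ α := by positivity
  have osc : l ≠ [] → |M s (pdL l Θ) G z| ≤ K * s ^ 2 * (B * s ^ α) := by
    intro hne
    obtain ⟨i, l', rfl⟩ := List.exists_cons_of_ne_nil hne
    refine (abs_M_le_osc (h.pdL (i :: l')) ((h.pdL l').integral_pd i) hs hG
      (B := B * s ^ α) fun ζ hζ => (hH ζ hζ).trans ?_).trans ?_
    · gcongr
    · gcongr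
  have eabs : |dM s Θ G l z| = s⁻¹ ^ l.length * |M s (pdL l Θ) G z| := by
    rw [dM, abs_mul, abs_of_nonneg (by positivity)]
  rw [eabs]
  constructor
  · intro hl
    by_cases hne : l = []
    · have h1 := abs_M_le (h.pdL l) hs (z := z) fun ζ _ => hB ζ
      have hpow : s ^ 2 ≤ s ^ α := by
        rw [← Real.rpow_natCast s 2]
        exact Real.rpow_le_rpow_of_exponent_ge hs hs1 (by push_cast; linarith)
      calc s⁻¹ ^ l.length * |M s (pdL l Θ) G z| = |M s (pdL l Θ) G z| := by simp [hne]
        _ ≤ K * s ^ 2 * B := h1.trans (by gcongr)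
        _ = K * B * s ^ 2 := by ring
        _ ≤ K * B * s ^ α := by gcongr
    · calc s⁻¹ ^ l.length * |M s (pdL l Θ) G z|
          ≤ s⁻¹ ^ 2 * (K * s ^ 2 * (B * s ^ α)) := by
            gcongr
            · exact osc hne
        _ = K * B * s ^ α := by field_simp
  · intro hl hne
    calc s⁻¹ ^ l.length * |M s (pdL l Θ) G z|
        ≤ s⁻¹ ^ 3 * (K * s ^ 2 * (B * s ^ α)) := by
          gcongr
          · exact osc hne
      _ = K * B * (s ^ α / s) := by field_simp
      _ = K * B * s ^ (α - 1) := by rw [Real.rpow_sub_one hs.ne']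

/-- Interior Schauder estimate for the weak equation with an `α`-Hölder right-hand side: `f` is a
mollification of itself plus the dyadic series of convolutions of `g`. -/
lemma schauder_base {α : ℝ} (hα0 : 0 < α) (hα1 : α < 1) (c : ℂ) {ρ R : ℝ} (hρ : 0 < ρ)
    (hρR : ρ < R) : ∃ C, 0 < C ∧ ∀ (f g : ℂ → ℝ) (B : ℝ),
      ContinuousOn f (Metric.ball c R) →
      (∀ z ∈ Metric.ball c R, |f z| ≤ B) → (∀ z ∈ Metric.ball c R, |g z| ≤ B) →
      (∀ z ∈ Metric.ball c R, ∀ w ∈ Metric.ball c R, |g z - g w| ≤ B * dist z w ^ α) →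
      WeakLap (Metric.ball c R) f g → HNormLe (Metric.ball c ρ) 2 α f (C * B) := by
  obtain ⟨φ, Ψ, kφ, kΨ, hφ1, hL⟩ := exists_kernels
  obtain ⟨K, hK0, hK⟩ := exists_kernel_bound φ Ψ
  obtain ⟨C, hC0, hC⟩ := holder_tsum hα0 hα1
  set δ : ℝ := min 1 ((R - ρ) / 2) with hδdef
  have hδ : 0 < δ := lt_min one_pos (by linarith)
  have hδ1 : δ ≤ 1 := min_le_left _ _
  have hδR : δ ≤ (R - ρ) / 2 := min_le_right _ _
  set K₂ : ℝ := (δ ^ 2)⁻¹ * (δ⁻¹ ^ 3 * K * δ ^ 2) with hK₂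
  have hK₂0 : 0 ≤ K₂ := by positivity
  refine ⟨K₂ + 2 * K₂ * (2 * ρ) ^ (1 - α) + C * (2 * K) + 1, by positivity, ?_⟩
  intro f g B hf hfB hgB hgH hw
  have hB0 : 0 ≤ B := (abs_nonneg _).trans (hfB c (Metric.mem_ball_self (hρ.trans hρR)))
  set Ω := Metric.ball c R with hΩ
  set f₁ := Ω.indicator f with hf₁
  set g₁ := Ω.indicator g with hg₁
  have hfi : Integrable f₁ := integrable_indicator_ball hf hfB
  have hgi : Integrable g₁ := integrable_indicator_ball (continuousOn_of_holder hα0 hgH) hgB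
  have hw₁ : WeakLap Ω f₁ g₁ := hw.indicator
  have bd : ∀ F : ℂ → ℝ, (∀ z ∈ Ω, |F z| ≤ B) → ∀ z, |Ω.indicator F z| ≤ B := by
    intro F hF z
    by_cases hz : z ∈ Ω
    · simpa [hz] using hF z hz
    · simpa [hz] using hB0
  have hf₁B := bd f hfB
  have hg₁B := bd g hgB
  set s : ℕ → ℝ := fun j => δ * (1 / 2) ^ j with hsdef
  have hs : ∀ j, 0 < s j := fun j => by positivity
  have hsδ : ∀ j, s j ≤ δ := fun j => by
    have : ((1:ℝ) / 2) ^ j ≤ 1 := pow_le_one₀ (by norm_num) (by norm_num)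
    simpa [hsdef] using mul_le_mul_of_nonneg_left this hδ.le
  have hs1 : ∀ j, s j ≤ 1 := fun j => (hsδ j).trans hδ1
  have hsub : ∀ z ∈ Metric.ball c ρ, ∀ ζ, dist ζ z ≤ δ → ζ ∈ Ω := by
    intro z hz ζ hζ
    rw [Metric.mem_ball] at hz
    rw [hΩ, Metric.mem_ball]
    have := dist_triangle ζ z c
    linarith
  have hsubΩ : Metric.ball c ρ ⊆ Ω := Metric.ball_subset_ball hρR.le
  have hH₁ : ∀ j, ∀ z ∈ Metric.ball c ρ, ∀ ζ, dist ζ z ≤ s j →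
      |g₁ ζ - g₁ z| ≤ B * dist ζ z ^ α := by
    intro j z hz ζ hζ
    have h1 := hsub z hz ζ (hζ.trans (hsδ j))
    simpa [hg₁, h1, hsubΩ hz] using hgH ζ h1 z (hsubΩ hz)
  -- the coarsest mollification, the dyadic pieces, and their derivatives
  set P : List (Fin 2) → ℂ → ℝ := fun l z => (δ ^ 2)⁻¹ * dM δ φ f₁ l z with hP
  set t : List (Fin 2) → ℕ → ℂ → ℝ := fun l j z => dM (s j) Ψ g₁ l z with ht
  have hPd : ∀ l i z, HasLineDerivAt ℝ (P l) (P (i :: l) z) z (cdir i) := fun l i z =>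
    HasDerivAt.const_mul _ (hasLineDerivAt_dM kφ δ hfi l z i)
  have htd : ∀ l j i z, HasLineDerivAt ℝ (t l j) (t (i :: l) j z) z (cdir i) := fun l j i z =>
    hasLineDerivAt_dM kΨ (s j) hgi l z i
  have hPb : ∀ l : List (Fin 2), l.length ≤ 3 → ∀ z, |P l z| ≤ K₂ * B := by
    intro l hl z
    have := abs_dM_le kφ hl (hK l hl).1 hδ hδ1 hB0 hf₁B z
    simp only [hP]
    rw [abs_mul, abs_of_nonneg (by positivity)]
    calc (δ ^ 2)⁻¹ * |dM δ φ f₁ l z| ≤ (δ ^ 2)⁻¹ * (δ⁻¹ ^ 3 * K * δ ^ 2 * B) := by gcongr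
      _ = K₂ * B := by rw [hK₂]; ring
  have htb : ∀ l : List (Fin 2), l.length ≤ 2 → ∀ j, ∀ z ∈ Metric.ball c ρ,
      |t l j z| ≤ K * B * s j ^ α := fun l hl j z hz =>
    (abs_dM_le_holder kΨ (hK l (by omega)).2 hα0 hα1 (hs j) (hs1 j) hK0 hB0 hgi hg₁B
      (hH₁ j z hz)).1 hl
  have htb' : ∀ l : List (Fin 2), l.length ≤ 2 → ∀ i j, ∀ z ∈ Metric.ball c ρ,
      |t (i :: l) j z| ≤ K * B * s j ^ (α - 1) := fun l hl i j z hz =>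
    (abs_dM_le_holder kΨ (hK (i :: l) (by simp; omega)).2 hα0 hα1 (hs j) (hs1 j) hK0 hB0 hgi hg₁B
      (hH₁ j z hz)).2 (by simp; omega) (by simp)
  have key : ∀ l : List (Fin 2), l.length ≤ 2 →
      (∀ x ∈ Metric.ball c ρ, Summable fun j => t l j x) ∧
      (∀ x ∈ Metric.ball c ρ, |∑' j, t l j x| ≤ C * (2 * K * B) * δ ^ α) ∧
      (∀ x ∈ Metric.ball c ρ, ∀ y ∈ Metric.ball c ρ,
        |∑' j, t l j x - ∑' j, t l j y| ≤ C * (2 * K * B) * dist x y ^ α) := by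
    intro l hl
    refine hC δ hδ (2 * K * B) (by positivity) _ (t l) ?_ ?_
    · intro j x hx
      refine (htb l hl j x hx).trans ?_
      have : 0 ≤ K * B * s j ^ α := mul_nonneg (mul_nonneg hK0 hB0) (Real.rpow_nonneg (hs j).le _)
      change _ ≤ 2 * K * B * s j ^ α
      linarith
    · intro j x hx y hy
      have := abs_sub_le_of_partials (F := t l j) (F' := fun i => t (i :: l) j)
        (fun i z _ => htd l j i z) (fun i z hz => htb' l hl i j z hz) hx hy
      refine this.trans (le_of_eq ?_)
      simp only [hsdef]
      ring
  have hsumα : Summable fun j => K * B * s j ^ α := by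
    have e : ∀ j : ℕ, s j ^ α = δ ^ α * ((1 / 2 : ℝ) ^ α) ^ j := by
      intro j
      simp only [hsdef]
      rw [Real.mul_rpow hδ.le (by positivity), ← Real.rpow_natCast, ← Real.rpow_mul (by norm_num),
        mul_comm (j:ℝ), Real.rpow_mul (by norm_num), Real.rpow_natCast]
    simp_rw [e]
    exact ((summable_geometric_of_lt_one (by positivity)
      (Real.rpow_lt_one (by norm_num) (by norm_num) hα0)).mul_left _).mul_left _
  set E : List (Fin 2) → ℂ → ℝ := fun l z => P l z + ∑' j, t l j z with hE
  have hEd : ∀ l : List (Fin 2), l.length < 2 → ∀ i, ∀ z ∈ Metric.ball c ρ,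
      HasLineDerivAt ℝ (E l) (E (i :: l) z) z (cdir i) := by
    intro l hl i z hz
    exact HasDerivAt.add (hPd l i z) (hasLineDerivAt_tsum Metric.isOpen_ball hsumα
      (fun j z _ => htd l j i z) (fun j z hz => htb (i :: l) (by simp; omega) j z hz)
      (key l hl.le).1 hz)
  -- the series telescopes to `f` minus its coarsest mollification
  have hE0 : ∀ z ∈ Metric.ball c ρ, E [] z = f z := by
    intro z hz
    have hcont : ContinuousAt f₁ z := by
      have h1 : ContinuousAt f z := hf.continuousAt (Metric.isOpen_ball.mem_nhds (hsubΩ hz))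
      refine h1.congr ?_
      filter_upwards [Metric.isOpen_ball.mem_nhds (hsubΩ hz)] with w hw
      simp [hf₁, hΩ, Set.indicator_of_mem hw]
    have hs0 : Tendsto s atTop (𝓝 0) := by
      have := (tendsto_pow_atTop_nhds_zero_of_lt_one (r := (1/2:ℝ)) (by norm_num)
        (by norm_num)).const_mul δ
      simpa [hsdef] using this
    have hlim := tendsto_moll kφ hφ1 hfi hcont hs hs0
    have hstep : ∀ j, t [] j z
        = ((s (j + 1)) ^ 2)⁻¹ * M (s (j + 1)) φ f₁ z - ((s j) ^ 2)⁻¹ * M (s j) φ f₁ z := by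
      intro j
      have e : s (j + 1) = s j / 2 := by simp only [hsdef]; ring
      rw [e, moll_step kφ kΨ hL hfi hw₁ (hs j)
        (fun ζ hζ => hsub z hz ζ ((Metric.mem_closedBall.1 hζ).trans (hsδ j)))]
      simp [ht, dM, pdL]
    have hpart : ∀ N, ∑ j ∈ Finset.range N, t [] j z
        = ((s N) ^ 2)⁻¹ * M (s N) φ f₁ z - ((s 0) ^ 2)⁻¹ * M (s 0) φ f₁ z := by
      intro N
      simp_rw [hstep]
      exact Finset.sum_range_sub (fun j => ((s j) ^ 2)⁻¹ * M (s j) φ f₁ z) N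
    have h1 := ((key [] (by simp)).1 z hz).hasSum.tendsto_sum_nat
    simp_rw [hpart] at h1
    have h2 := tendsto_nhds_unique h1 (hlim.sub_const _)
    have hs00 : s 0 = δ := by simp [hsdef]
    simp only [hE]
    rw [h2, hs00]
    simp only [hP, dM, pdL, List.length_nil, pow_zero, one_mul]
    have : f₁ z = f z := by simp [hf₁, hsubΩ hz]
    rw [this]
    ring
  have hEb : ∀ l : List (Fin 2), l.length ≤ 2 → ∀ z ∈ Metric.ball c ρ, |E l z|
      ≤ (K₂ + 2 * K₂ * (2 * ρ) ^ (1 - α) + C * (2 * K) + 1) * B := by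
    intro l hl z hz
    have h1 := hPb l (by omega) z
    have h2 := (key l hl).2.1 z hz
    have h3 : δ ^ α ≤ 1 := Real.rpow_le_one hδ.le hδ1 hα0.le
    have h4 : C * (2 * K * B) * δ ^ α ≤ C * (2 * K * B) * 1 := by gcongr
    have h5 : 0 ≤ 2 * K₂ * (2 * ρ) ^ (1 - α) * B := by positivity
    have := abs_add_le (P l z) (∑' j, t l j z)
    simp only [hE]
    linarith
  have hEH : ∀ l : List (Fin 2), l.length ≤ 2 → ∀ x ∈ Metric.ball c ρ, ∀ y ∈ Metric.ball c ρ,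
      |E l x - E l y|
      ≤ (K₂ + 2 * K₂ * (2 * ρ) ^ (1 - α) + C * (2 * K) + 1) * B * dist x y ^ α := by
    intro l hl x hx y hy
    have h1 := abs_sub_le_of_partials (F := P l) (F' := fun i => P (i :: l))
      (fun i z _ => hPd l i z) (fun i z _ => hPb (i :: l) (by simp; omega) z) hx hy
    have h2 := (key l hl).2.2 x hx y hy
    have hd : dist x y ≤ 2 * ρ := by
      have := dist_triangle_right x y c
      rw [Metric.mem_ball] at hx hy
      linarith
    -- on a disc a Lipschitz function is Hölder
    have h3 : dist x y ≤ (2 * ρ) ^ (1 - α) * dist x y ^ α := by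
      rcases eq_or_lt_of_le (dist_nonneg (x := x) (y := y)) with h0 | h0
      · rw [← h0, Real.zero_rpow hα0.ne', mul_zero]
      · calc dist x y = dist x y ^ (1 - α) * dist x y ^ α := by
              rw [← Real.rpow_add h0, sub_add_cancel, Real.rpow_one]
          _ ≤ (2 * ρ) ^ (1 - α) * dist x y ^ α := by
              gcongr
    have h4 : 2 * (K₂ * B) * dist x y
        ≤ 2 * (K₂ * B) * ((2 * ρ) ^ (1 - α) * dist x y ^ α) := by gcongr
    have h5 : 0 ≤ (K₂ + 1) * B * dist x y ^ α := by positivity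
    have := abs_add_le (P l x - P l y) (∑' j, t l j x - ∑' j, t l j y)
    have e : E l x - E l y = P l x - P l y + (∑' j, t l j x - ∑' j, t l j y) := by
      simp only [hE]; ring
    rw [e]
    linarith
  refine ⟨fun l => if l = [] then f else E l, by simp, ?_, ?_⟩
  · intro l hl i z hz
    rw [hasPartialAtC_iff]
    simp only [List.cons_ne_nil, if_false]
    refine (hEd l hl i z hz).congr_of_eventuallyEq ?_
    by_cases hne : l = []
    · filter_upwards [Metric.isOpen_ball.mem_nhds hz] with w hw
      simp [hne, hE0 w hw]
    · simp [hne]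
  · intro l hl
    have e : ∀ z ∈ Metric.ball c ρ, (if l = [] then f else E l) z = E l z := by
      intro z hz
      by_cases hne : l = []
      · simp [hne, hE0 z hz]
      · simp [hne]
    refine ⟨fun z hz => ?_, fun x hx y hy => ?_⟩
    · simp only [e z hz]; exact hEb l hl z hz
    · simp only [e x hx, e y hy]; exact hEH l hl x hx y hy

/-! ### Solutions off the real axis are weak solutions -/

/-- The divergence theorem for a compactly supported continuous vector field that is differentiable
off the real axis: the two half-planes contribute opposite boundary terms on the axis. -/
lemma integral_divergence_eq_zero {V₀ V₁ W : ℂ → ℝ} (c₀ : Continuous V₀) (c₁ : Continuous V₁)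
    (cW : Continuous W) {L : ℝ} (h₀ : ∀ z : ℂ, L ≤ |z.re| ∨ L ≤ |z.im| → V₀ z = 0)
    (h₁ : ∀ z : ℂ, L ≤ |z.re| ∨ L ≤ |z.im| → V₁ z = 0)
    (hW : ∀ z : ℂ, L ≤ |z.re| ∨ L ≤ |z.im| → W z = 0) (hL : 0 < L)
    (d₀ : ∀ z : ℂ, z.im ≠ 0 → DifferentiableAt ℝ V₀ z)
    (d₁ : ∀ z : ℂ, z.im ≠ 0 → DifferentiableAt ℝ V₁ z)
    (hdiv : ∀ z : ℂ, z.im ≠ 0 → pd 0 V₀ z + pd 1 V₁ z = W z) :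
    ∫ z, W z = 0 := by
  classical
  set e : ℝ × ℝ →L[ℝ] ℂ := (Complex.equivRealProdCLM.symm : ℝ × ℝ →L[ℝ] ℂ) with he
  have ere : ∀ x : ℝ × ℝ, (e x).re = x.1 := fun x => by simp [he]
  have eim : ∀ x : ℝ × ℝ, (e x).im = x.2 := fun x => by simp [he]
  have e10 : e (1, 0) = cdir 0 := by apply Complex.ext <;> simp [ere, eim, cdir]
  have e01 : e (0, 1) = cdir 1 := by apply Complex.ext <;> simp [ere, eim, cdir]
  -- derivatives of the fields off the axis, with values on the axis making the divergence `W`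
  set f' : ℝ × ℝ → ℝ × ℝ →L[ℝ] ℝ := fun x =>
    if x.2 = 0 then W (e x) • ContinuousLinearMap.fst ℝ ℝ ℝ else (fderiv ℝ V₀ (e x)).comp e with hf'
  set g' : ℝ × ℝ → ℝ × ℝ →L[ℝ] ℝ := fun x =>
    if x.2 = 0 then 0 else (fderiv ℝ V₁ (e x)).comp e with hg'
  have hsum : ∀ x, f' x (1, 0) + g' x (0, 1) = W (e x) := by
    intro x
    by_cases hx : x.2 = 0
    · simp [hf', hg', hx]
    · have := hdiv (e x) (by rwa [eim])
      simp only [hf', hg', hx, if_false, ContinuousLinearMap.comp_apply, e10, e01]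
      exact this
  have strip : ∀ a b : ℝ, (0 ∉ Set.Ioo (min a b) (max a b)) →
      (∫ x in (-L)..L, ∫ y in a..b, W (e (x, y))) =
        ((∫ x in (-L)..L, V₁ (e (x, b))) - ∫ x in (-L)..L, V₁ (e (x, a))) := by
    intro a b hab
    have hne : ∀ x ∈ Set.Ioo (min (-L) L) (max (-L) L) ×ˢ Set.Ioo (min a b) (max a b)
        \ (∅ : Set (ℝ × ℝ)), x.2 ≠ 0 := by
      rintro x ⟨⟨_, hx⟩, _⟩ h0
      rw [h0] at hx
      exact hab hx
    have := integral2_divergence_prod_of_hasFDerivAt_off_countable (fun x => V₀ (e x))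
      (fun x => V₁ (e x)) f' g' (-L) a L b ∅ Set.countable_empty
      (c₀.comp e.continuous).continuousOn (c₁.comp e.continuous).continuousOn
      (fun x hx => by
        have h := hne x hx
        have h2 := ((d₀ (e x) (by rwa [eim])).hasFDerivAt.comp x e.hasFDerivAt)
        simpa [hf', h, Function.comp_def] using h2)
      (fun x hx => by
        have h := hne x hx
        have h2 := ((d₁ (e x) (by rwa [eim])).hasFDerivAt.comp x e.hasFDerivAt)
        simpa [hg', h, Function.comp_def] using h2)
      (by
        simp only [hsum]
        exact (cW.comp e.continuous).continuousOn.integrableOn_compact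
          (isCompact_uIcc.prod isCompact_uIcc))
    simp only [hsum] at this
    rw [this]
    have b1 : ∀ y, V₀ (e (L, y)) = 0 := fun y => h₀ _ (Or.inl (by rw [ere]; exact le_abs_self L))
    have b2 : ∀ y, V₀ (e (-L, y)) = 0 := fun y =>
      h₀ _ (Or.inl (by rw [ere]; simpa using le_abs_self L))
    simp [b1, b2]
  have up := strip 0 L (by simp [hL.le])
  have down := strip (-L) 0 (by simp [hL.le])
  have t1 : ∀ x, V₁ (e (x, L)) = 0 := fun x => h₁ _ (Or.inr (by rw [eim]; exact le_abs_self L))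
  have t2 : ∀ x, V₁ (e (x, -L)) = 0 := fun x =>
    h₁ _ (Or.inr (by rw [eim]; simpa using le_abs_self L))
  simp only [t1, t2, intervalIntegral.integral_zero, zero_sub, sub_zero] at up down
  have cWe : Continuous fun x : ℝ × ℝ => W (e x) := cW.comp e.continuous
  have hWi : Integrable fun x : ℝ × ℝ => W (e x) := by
    refine cWe.integrable_of_hasCompactSupport ?_
    refine HasCompactSupport.intro (K := Set.Icc (-L) L ×ˢ Set.Icc (-L) L)
      (isCompact_Icc.prod isCompact_Icc) fun x hx => hW _ ?_
    rw [ere, eim]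
    by_contra! hcon
    exact hx ⟨⟨(abs_lt.1 hcon.1).1.le, (abs_lt.1 hcon.1).2.le⟩,
      ⟨(abs_lt.1 hcon.2).1.le, (abs_lt.1 hcon.2).2.le⟩⟩
  have hIoc : ∀ x : ℝ, ¬ (L ≤ |x|) → x ∈ Set.Ioc (-L) L := fun x hx => by
    rw [not_le, abs_lt] at hx
    exact ⟨hx.1, hx.2.le⟩
  have hconv : ∫ z, W z = ∫ x : ℝ × ℝ, W (e x) :=
    (Complex.volume_preserving_equiv_real_prod.symm.integral_comp'
      (g := fun z => W z)).symm
  have inner : ∀ x, ∫ y, W (e (x, y)) = ∫ y in (-L)..L, W (e (x, y)) := by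
    intro x
    refine (intervalIntegral.integral_eq_integral_of_support_subset fun y hy => hIoc y ?_).symm
    exact fun h => hy (hW _ (Or.inr (by rwa [eim])))
  have outer : ∫ x, ∫ y, W (e (x, y)) = ∫ x in (-L)..L, ∫ y, W (e (x, y)) := by
    refine (intervalIntegral.integral_eq_integral_of_support_subset fun x hx => hIoc x ?_).symm
    refine fun h => hx ?_
    have : ∀ y, W (e (x, y)) = 0 := fun y => hW _ (Or.inl (by rwa [ere]))
    simp [this]
  rw [hconv, Measure.volume_eq_prod, integral_prod _ hWi, outer]
  have ii : ∀ x a b, IntervalIntegrable (fun y => W (e (x, y))) volume a b := fun x a b =>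
    (cWe.comp (Continuous.prodMk_right x)).intervalIntegrable a b
  have ic : ∀ a b, Continuous fun x => ∫ y in a..b, W (e (x, y)) := fun a b =>
    intervalIntegral.continuous_parametric_intervalIntegral_of_continuous' (f := fun x y => W (e (x, y))) cWe a b
  have split : ∀ x, ∫ y, W (e (x, y))
      = (∫ y in (-L)..0, W (e (x, y))) + ∫ y in (0:ℝ)..L, W (e (x, y)) := fun x => by
    rw [inner, intervalIntegral.integral_add_adjacent_intervals (ii x _ _) (ii x _ _)]
  simp_rw [split]
  rw [intervalIntegral.integral_add ((ic _ _).intervalIntegrable _ _)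
    ((ic _ _).intervalIntegrable _ _), up, down]
  ring

/-- Green's second identity: a `C¹` function solving the equation off the real axis is a weak
solution across it. -/
lemma weakLap_of_classical {U : Set ℂ} (hU : IsOpen U) {f g : ℂ → ℝ} (hf1 : ContDiffOn ℝ 1 f U)
    (hg : ContinuousOn g U) (hf2 : ContDiffOn ℝ 2 f (U \ realAxis))
    (heq : ∀ z ∈ U \ realAxis, lapl f z = g z) : WeakLap U f g := by
  intro ψ hψ hc hs
  have hfd : ContinuousOn (fderiv ℝ f) U := hf1.continuousOn_fderiv_of_isOpen hU le_rfl
  have hpf : ∀ i, ContinuousOn (pd i f) U := fun i => hfd.clm_apply continuousOn_const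
  have hsp : ∀ i, tsupport (pd i ψ) ⊆ U := fun i => (tsupport_pd ψ i).trans hs
  have hψ2 : ∀ i, ContDiff ℝ ∞ (pd i (pd i ψ)) := fun i => contDiff_pd (contDiff_pd hψ i) i
  have cL : Continuous (Lap ψ) := (hψ2 0).continuous.add (hψ2 1).continuous
  have sL : tsupport (Lap ψ) ⊆ tsupport ψ := by
    refine closure_minimal (fun z hz => ?_) (isClosed_tsupport ψ)
    by_contra h
    exact hz (Lap_eq_zero h)
  have hcL : HasCompactSupport (Lap ψ) :=
    HasCompactSupport.of_support_subset_isCompact hc (subset_closure.trans sL)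
  have cfL := continuous_mul_of_tsupport hU hf1.continuousOn cL (sL.trans hs)
  have cgψ := continuous_mul_of_tsupport hU hg hψ.continuous hs
  have ifL := integrable_mul_of_tsupport hU hf1.continuousOn cL hcL (sL.trans hs)
  have igψ := integrable_mul_of_tsupport hU hg hψ.continuous hc hs
  set V : Fin 2 → ℂ → ℝ := fun i z => f z * pd i ψ z - pd i f z * ψ z with hV
  have cV : ∀ i, Continuous (V i) := fun i =>
    (continuous_mul_of_tsupport hU hf1.continuousOn (contDiff_pd hψ i).continuous (hsp i)).sub
      (continuous_mul_of_tsupport hU (hpf i) hψ.continuous hs)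
  have V0 : ∀ i z, z ∉ tsupport ψ → V i z = 0 := fun i z hz => by
    simp [hV, pd_eq_zero hz, image_eq_zero_of_notMem_tsupport hz]
  have hUo : IsOpen (U \ realAxis) :=
    hU.sdiff (isClosed_eq Complex.continuous_im continuous_const)
  have hdV : ∀ i z, z.im ≠ 0 → DifferentiableAt ℝ (V i) z ∧
      (pd i (V i) z = f z * pd i (pd i ψ) z - pd i (pd i f) z * ψ z) := by
    intro i z hz
    by_cases hzs : z ∈ tsupport ψ
    · have hzU : z ∈ U \ realAxis := ⟨hs hzs, hz⟩
      have hf2z : ContDiffAt ℝ 2 f z := hf2.contDiffAt (hUo.mem_nhds hzU)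
      have df : DifferentiableAt ℝ f z := hf2z.differentiableAt (by norm_num)
      have dpf : DifferentiableAt ℝ (pd i f) z :=
        ((hf2z.fderiv_right (m := 1) (by norm_num)).differentiableAt (by norm_num)).clm_apply
          (differentiableAt_const _)
      have dψ : DifferentiableAt ℝ ψ z := (hψ.differentiable (by simp)) z
      have dpψ : DifferentiableAt ℝ (pd i ψ) z := ((contDiff_pd hψ i).differentiable (by simp)) z
      refine ⟨(df.mul dpψ).sub (dpf.mul dψ), ?_⟩
      change fderiv ℝ (fun z => f z * pd i ψ z - pd i f z * ψ z) z (cdir i) = _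
      rw [fderiv_fun_sub (df.fun_mul dpψ) (dpf.fun_mul dψ), fderiv_fun_mul df dpψ, fderiv_fun_mul dpf dψ]
      simp only [_root_.sub_apply, _root_.add_apply,
        _root_.smul_apply, smul_eq_mul]
      change f z * pd i (pd i ψ) z + pd i ψ z * pd i f z
        - (pd i f z * pd i ψ z + ψ z * pd i (pd i f) z) = _
      ring
    · have hev : V i =ᶠ[𝓝 z] fun _ => 0 := by
        filter_upwards [(isClosed_tsupport ψ).isOpen_compl.mem_nhds hzs] with w hw
        exact V0 i w hw
      refine ⟨(differentiableAt_const (0:ℝ)).congr_of_eventuallyEq hev, ?_⟩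
      have : pd i (V i) z = 0 := by simp [pd, hev.fderiv_eq]
      rw [this, image_eq_zero_of_notMem_tsupport hzs,
        pd_eq_zero fun h => hzs (tsupport_pd ψ i h)]
      ring
  obtain ⟨L, hL, hsub⟩ := hc.isBounded.subset_ball_lt 0 0
  have hout : ∀ z : ℂ, L ≤ |z.re| ∨ L ≤ |z.im| → z ∉ tsupport ψ := by
    intro z hz hzs
    have h1 := mem_ball_zero_iff.1 (hsub hzs)
    have h2 := Complex.abs_re_le_norm z
    have h3 := Complex.abs_im_le_norm z
    rcases hz with hz | hz <;> linarith
  have key := integral_divergence_eq_zero (W := fun z => f z * Lap ψ z - g z * ψ z) (cV 0) (cV 1) (cfL.sub cgψ)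
    (fun z hz => V0 0 z (hout z hz)) (fun z hz => V0 1 z (hout z hz))
    (fun z hz => by
      simp [Lap_eq_zero (hout z hz), image_eq_zero_of_notMem_tsupport (hout z hz)]) hL
    (fun z hz => (hdV 0 z hz).1) (fun z hz => (hdV 1 z hz).1)
    (fun z hz => by
      rw [(hdV 0 z hz).2, (hdV 1 z hz).2]
      by_cases hzs : z ∈ tsupport ψ
      · have h := heq z ⟨hs hzs, hz⟩
        change pd 0 (pd 0 f) z + pd 1 (pd 1 f) z = g z at h
        rw [← h]
        simp only [Lap]
        ring
      · rw [image_eq_zero_of_notMem_tsupport hzs]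
        simp only [Lap]
        ring)
  rw [integral_sub ifL igψ] at key
  linarith

/-! ### Higher regularity -/

lemma WeakLap.mono {Ω Ω' : Set ℂ} {f g : ℂ → ℝ} (h : WeakLap Ω f g) (hsub : Ω' ⊆ Ω) :
    WeakLap Ω' f g := fun ψ h1 h2 h3 => h ψ h1 h2 (h3.trans hsub)

/-- The weak equation may be differentiated in a coordinate direction. -/
lemma WeakLap.differentiate {Ω : Set ℂ} (hΩ : IsOpen Ω) {f g fa ga : ℂ → ℝ} {a : Fin 2}
    (h : WeakLap Ω f g) (hf : ContinuousOn f Ω) (hg : ContinuousOn g Ω) (hfa : ContinuousOn fa Ω)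
    (hga : ContinuousOn ga Ω) (df : ∀ z ∈ Ω, HasLineDerivAt ℝ f (fa z) z (cdir a))
    (dg : ∀ z ∈ Ω, HasLineDerivAt ℝ g (ga z) z (cdir a)) : WeakLap Ω fa ga := by
  intro ψ hψ hc hs
  have sL : tsupport (Lap ψ) ⊆ tsupport ψ := by
    refine closure_minimal (fun z hz => ?_) (isClosed_tsupport ψ)
    by_contra h
    exact hz (Lap_eq_zero h)
  have hLs : ContDiff ℝ ∞ (Lap ψ) :=
    (contDiff_pd (contDiff_pd hψ 0) 0).add (contDiff_pd (contDiff_pd hψ 1) 1)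
  have hLc : HasCompactSupport (Lap ψ) :=
    HasCompactSupport.of_support_subset_isCompact hc (subset_closure.trans sL)
  have hpc : HasCompactSupport (pd a ψ) :=
    HasCompactSupport.of_support_subset_isCompact hc (subset_closure.trans (tsupport_pd ψ a))
  have e1 := integral_mul_pd hΩ hf hfa df hLs hLc (sL.trans hs)
  have e2 := integral_mul_pd hΩ hg hga dg hψ hc hs
  have e3 := h (pd a ψ) (contDiff_pd hψ a) hpc ((tsupport_pd ψ a).trans hs)
  rw [Lap_pd hψ] at e3
  linarith

/-- Gluing of derivative families: if `f` is bounded and Hölder and has partial derivatives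
`fa 0, fa 1` in `C^{m+α}`, then `f ∈ C^{m+1+α}`. -/
lemma HNormLe.succ {Ω : Set ℂ} {m : ℕ} {α B : ℝ} {f : ℂ → ℝ} {fa : Fin 2 → ℂ → ℝ}
    (hf : ∀ s ∈ Ω, |f s| ≤ B) (hfH : ∀ s ∈ Ω, ∀ t ∈ Ω, |f s - f t| ≤ B * dist s t ^ α)
    (hd : ∀ a, ∀ s ∈ Ω, HasPartialAtC f (cdir a) s (fa a s))
    (h : ∀ a, HNormLe Ω m α (fa a) B) : HNormLe Ω (m + 1) α f B := by
  choose D D0 D1 D2 using h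
  -- the last letter of the list is the derivative taken first
  set E : List (Fin 2) → ℂ → ℝ := fun l => match l.reverse with
    | [] => f
    | a :: l' => D a l'.reverse with hE
  have Es : ∀ l a, E (l ++ [a]) = D a l := fun l a => by simp [hE]
  have E0 : E [] = f := by simp [hE]
  refine ⟨E, E0, fun l hl i s hs => ?_, fun l hl => ?_⟩
  · rcases List.eq_nil_or_concat' l with rfl | ⟨l', a, rfl⟩
    · have : E [i] = D i [] := Es [] i
      rw [this, E0, D0]
      exact hd i s hs
    · rw [← List.cons_append, Es, Es]
      exact D1 a l' (by simpa using hl) i s hs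
  · rcases List.eq_nil_or_concat' l with rfl | ⟨l', a, rfl⟩
    · rw [E0]
      exact ⟨hf, hfH⟩
    · rw [Es]
      exact D2 a l' (by simpa using hl)

/-- Conversely, the first partial derivatives of a `C^{m+1+α}` function are in `C^{m+α}`. -/
lemma HNormLe.firstPartials {Ω : Set ℂ} {m : ℕ} {α B : ℝ} {f : ℂ → ℝ} (h : HNormLe Ω (m + 1) α f B) :
    ∃ fa : Fin 2 → ℂ → ℝ, (∀ a, ∀ s ∈ Ω, HasPartialAtC f (cdir a) s (fa a s)) ∧
      ∀ a, HNormLe Ω m α (fa a) B := by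
  obtain ⟨D, D0, D1, D2⟩ := h
  refine ⟨fun a => D [a], fun a s hs => ?_, fun a => ⟨fun l => D (l ++ [a]), rfl, ?_, ?_⟩⟩
  · rw [← D0]
    exact D1 [] (by simp) a s hs
  · intro l hl i s hs
    exact D1 (l ++ [a]) (by simpa using hl) i s hs
  · intro l hl
    exact D2 (l ++ [a]) (by simpa using hl)

lemma HNormLe.abs_le {Ω : Set ℂ} {m : ℕ} {α B : ℝ} {f : ℂ → ℝ} (h : HNormLe Ω m α f B) :
    ∀ s ∈ Ω, |f s| ≤ B := by
  obtain ⟨D, D0, _, D2⟩ := h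
  have := (D2 [] (by simp)).1
  rwa [D0] at this

lemma HNormLe.holder {Ω : Set ℂ} {m : ℕ} {α B : ℝ} {f : ℂ → ℝ} (h : HNormLe Ω m α f B) :
    ∀ s ∈ Ω, ∀ t ∈ Ω, |f s - f t| ≤ B * dist s t ^ α := by
  obtain ⟨D, D0, _, D2⟩ := h
  have := (D2 [] (by simp)).2
  rwa [D0] at this

/-- Interior Schauder estimate of arbitrary order, by induction on the order: the partial
derivatives of `f` solve the differentiated equation. -/
lemma schauder_weak {α : ℝ} (hα0 : 0 < α) (hα1 : α < 1) (c : ℂ) (m : ℕ) : ∀ {ρ R : ℝ}, 0 < ρ →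
    ρ < R → ∃ C, 0 < C ∧ ∀ (f g : ℂ → ℝ) (B : ℝ),
      ContinuousOn f (Metric.ball c R) → (∀ z ∈ Metric.ball c R, |f z| ≤ B) →
      HNormLe (Metric.ball c R) m α g B →
      WeakLap (Metric.ball c R) f g → HNormLe (Metric.ball c ρ) (m + 2) α f (C * B) := by
  induction m with
  | zero =>
    intro ρ R hρ hρR
    obtain ⟨C, hC0, hC⟩ := schauder_base hα0 hα1 c hρ hρR
    exact ⟨C, hC0, fun f g B hf hfB hg hw => hC f g B hf hfB hg.abs_le hg.holder hw⟩
  | succ m ih =>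
    intro ρ R hρ hρR
    set ρ' : ℝ := (ρ + R) / 2 with hρ'
    have h1 : ρ < ρ' := by rw [hρ']; linarith
    have h2 : ρ' < R := by rw [hρ']; linarith
    obtain ⟨C₁, hC₁, H₁⟩ := schauder_base hα0 hα1 c (hρ.trans h1) h2
    obtain ⟨C₂, hC₂, H₂⟩ := ih hρ h1
    refine ⟨C₁ + C₂ * (C₁ + 1), by positivity, fun f g B hf hfB hg hw => ?_⟩
    have hB0 : 0 ≤ B := (abs_nonneg _).trans (hfB c (Metric.mem_ball_self (hρ.trans hρR)))
    have sub1 : Metric.ball c ρ ⊆ Metric.ball c ρ' := Metric.ball_subset_ball h1.le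
    have sub2 : Metric.ball c ρ' ⊆ Metric.ball c R := Metric.ball_subset_ball h2.le
    have hbase := H₁ f g B hf hfB hg.abs_le hg.holder hw
    obtain ⟨fa, dfa, Hfa⟩ := hbase.firstPartials
    obtain ⟨ga, dga, Hga⟩ := hg.firstPartials
    have m1 : C₁ * B ≤ (C₁ + 1) * B := by linarith
    have m2 : B ≤ (C₁ + 1) * B := by
      have := mul_nonneg hC₁.le hB0
      linarith
    have m3 : C₁ * B ≤ (C₁ + C₂ * (C₁ + 1)) * B := by
      have : 0 ≤ C₂ * (C₁ + 1) * B := by positivity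
      linarith
    have m4 : C₂ * ((C₁ + 1) * B) ≤ (C₁ + C₂ * (C₁ + 1)) * B := by
      have : 0 ≤ C₁ * B := by positivity
      linarith
    have hf' := hbase.mono sub1 le_rfl m3
    refine HNormLe.succ (fa := fa) hf'.abs_le hf'.holder (fun a s hs => dfa a s (sub1 hs))
      fun a => ?_
    have cfa := continuousOn_of_holder hα0 (Hfa a).holder
    have cga := (continuousOn_of_holder hα0 (Hga a).holder).mono sub2
    have cg := (continuousOn_of_holder hα0 hg.holder).mono sub2
    have hwa : WeakLap (Metric.ball c ρ') (fa a) (ga a) :=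
      (hw.mono sub2).differentiate Metric.isOpen_ball (hf.mono sub2) cg cfa cga
        (fun z hz => hasPartialAtC_iff.1 (dfa a z hz))
        (fun z hz => hasPartialAtC_iff.1 (dga a z (sub2 hz)))
    exact (H₂ (fa a) (ga a) ((C₁ + 1) * B) cfa (fun z hz => ((Hfa a).abs_le z hz).trans m1)
      ((Hga a).mono sub2 le_rfl m2) hwa).mono subset_rfl le_rfl m4

lemma ckNormLeC_iff {Ω : Set ℂ} {k B : ℝ} {g : ℂ → ℝ} :
    CkNormLeC Ω k g B ↔ HNormLe Ω ⌊k⌋₊ (k - ⌊k⌋₊) g B := Iff.rfl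

end

/-- interior Schauder estimate across the real axis, estimate (2.3):
`|f|_{C^{k+2}(D')} ≤ c·(|f|_{C¹(D)} + |g|_{C^k(D)})` for solutions of `Δf = g` off ℝ. -/
theorem schauder_estimate_across_real_axis
    (k : ℝ) (hk : 0 < k) (hknonint : ∀ n : ℕ, (n : ℝ) ≠ k)
    (c₀ : ℂ) (r : ℝ) (hr : 0 < r)
    (D' : Set ℂ) (hD'open : IsOpen D') (hD'cpt : IsCompact (closure D'))
    (hD'sub : closure D' ⊆ Metric.ball c₀ r) :
    ∃ c : ℝ, 0 < c ∧
      ∀ U : Set ℂ, IsOpen U → closure (Metric.ball c₀ r) ⊆ U →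
      ∀ f g : ℂ → ℝ,
        ContDiffOn ℝ 1 f U →
        MemCkC U k g →
        ContDiffOn ℝ 2 f (U \ realAxis) →
        (∀ z ∈ U \ realAxis, lapl f z = g z) →
        ∀ B₁ Bk : ℝ,
          (∀ s ∈ Metric.ball c₀ r,
            |f s| ≤ B₁ ∧ |fderiv ℝ f s 1| ≤ B₁ ∧ |fderiv ℝ f s Complex.I| ≤ B₁) →
          CkNormLeC (Metric.ball c₀ r) k g Bk →
          CkNormLeC D' (k + 2) f (c * (B₁ + Bk)) := by
  have hα0 : 0 < k - ⌊k⌋₊ := sub_pos.2 ((Nat.floor_le hk.le).lt_of_ne (hknonint _))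
  have hα1 : k - ⌊k⌋₊ < 1 := by linarith [Nat.lt_floor_add_one k]
  obtain ⟨ρ, hρ, hρr, hD'⟩ : ∃ ρ, 0 < ρ ∧ ρ < r ∧ D' ⊆ Metric.ball c₀ ρ := by
    obtain ⟨ρ, hρ, h⟩ := exists_pos_lt_subset_ball hr hD'cpt.isClosed hD'sub
    exact ⟨ρ, hρ.1, hρ.2, subset_closure.trans h⟩
  obtain ⟨C, hC0, hC⟩ := schauder_weak hα0 hα1 c₀ ⌊k⌋₊ hρ hρr
  refine ⟨C, hC0, fun U hU hDU f g hf1 hg hf2 heq B₁ Bk hB₁ hBk => ?_⟩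
  have hsub : Metric.ball c₀ r ⊆ U := subset_closure.trans hDU
  have hc₀ : c₀ ∈ Metric.ball c₀ r := Metric.mem_ball_self hr
  rw [ckNormLeC_iff] at hBk
  have hB₁0 : 0 ≤ B₁ := (abs_nonneg _).trans (hB₁ c₀ hc₀).1
  have hBk0 : 0 ≤ Bk := (abs_nonneg _).trans (hBk.abs_le c₀ hc₀)
  obtain ⟨B, hgU⟩ := hg
  rw [ckNormLeC_iff] at hgU
  have hw := (weakLap_of_classical hU hf1 (continuousOn_of_holder hα0 hgU.holder) hf2 heq).mono hsub
  have hmain := hC f g (B₁ + Bk) (hf1.continuousOn.mono hsub)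
    (fun z hz => (hB₁ z hz).1.trans (by linarith)) (hBk.mono subset_rfl le_rfl (by linarith)) hw
  have hfl : ⌊k + 2⌋₊ = ⌊k⌋₊ + 2 := by
    exact_mod_cast Nat.floor_add_natCast hk.le 2
  rw [ckNormLeC_iff, hfl]
  have hα : k + 2 - ((⌊k⌋₊ + 2 : ℕ) : ℝ) = k - ⌊k⌋₊ := by push_cast; ring
  rw [hα]
  exact hmain.mono hD' le_rfl le_rfl
end
end
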